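/- (Application to the fractional system) For i=1,2 let 1 < α_i ≤ 2, β_i > 0, 0 ≤ η_i ≤ 1 with β_iΓ(α_i) < (1−η_i)^{α_i−1}, let b_i satisfy η_i ≤ b_i < 1 and β_iΓ(α_i) > (b_i−η_i)^{α_i−1}, and define k_i(t,s) = β_i + 1_{{s≤η_i}}(η_i−s)^{α_i−1}/Γ(α_i) − 1_{{s≤t}}(t−s)^{α_i−1}/Γ(α_i) and c_i = min{ (β_iΓ(α_i) − (b_i−η_i)^{α_i−1})/((1−η_i)^{α_i−1} − β_iΓ(α_i)), (β_iΓ(α_i) − (b_i−η_i)^{α_i−1})/(β_iΓ(α_i) + η_i^{α_i−1}) }. Let f_1,f_2:[0,1]×ℝ×ℝ→[0,∞) be continuous, and define m_i > 0 by 1/m_i = sup_{t∈[0,1]} ∫₀¹ |k_i(t,s)| ds and M_i > 0 by 1/M_i = inf_{t∈[0,b_i]} ∫₀^{b_i} k_i(t,s) ds (assumed positive). If there exist ρ₁,ρ₂,r₁,r₂ ∈ (0,∞) with ρ₁ < r₁ and ρ₂ < r₂ such that f₁(t,u,v) < m₁ρ₁ and f₂(t,u,v) < m₂ρ₂ for all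 t∈[0,1], u∈[−ρ₁,ρ₁], v∈[−ρ₂,ρ₂], and f₁(t,u,v) > M₁r₁ for all t∈[0,b₁], u∈[r₁,r₁/c₁], v∈[−r₂/c₂,r₂/c₂], and f₂(t,u,v) > M₂r₂ for all t∈[0,b₂], u∈[−r₁/c₁,r₁/c₁], v∈[r₂,r₂/c₂], then the system u(t) = ∫₀¹ k₁(t,s) f₁(s,u(s),v(s)) ds, v(t) = ∫₀¹ k₂(t,s) f₂(s,u(s),v(s)) ds has at least one solution (u,v) in the cone K with max(‖u‖_∞,‖v‖_∞) > 0. -/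

import Mathlib

open MeasureTheory Set Real

noncomputable def supNorm (w : ℝ → ℝ) : ℝ := ⨆ t : Set.Icc (0:ℝ) 1, |w t.1|

noncomputable def infOn (a b : ℝ) (w : ℝ → ℝ) : ℝ := ⨅ t : Set.Icc a b, w t.1

/-- Membership in the cone `K ⊆ C[0,1] × C[0,1]`. -/
def inCone (a₁ b₁ c₁ a₂ b₂ c₂ : ℝ) (u v : ℝ → ℝ) : Prop :=
  ContinuousOn u (Set.Icc 0 1) ∧ ContinuousOn v (Set.Icc 0 1) ∧
    c₁ * supNorm u ≤ infOn a₁ b₁ u ∧ c₂ * supNorm v ≤ infOn a₂ b₂ v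

/-- `(u, v)` solves the system of Hammerstein integral equations. -/
def isSolution (k₁ k₂ : ℝ → ℝ → ℝ) (f₁ f₂ : ℝ → ℝ → ℝ → ℝ) (u v : ℝ → ℝ) : Prop :=
  (∀ t ∈ Set.Icc (0:ℝ) 1, u t = ∫ s in (0:ℝ)..1, k₁ t s * f₁ s (u s) (v s)) ∧
    (∀ t ∈ Set.Icc (0:ℝ) 1, v t = ∫ s in (0:ℝ)..1, k₂ t s * f₂ s (u s) (v s))

section Scarf

/-- dominance -/
def ScDom {V I O : Type*} [LinearOrder O] (key : I → V → O) (Z : Finset V) : Prop :=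
  ∀ y, ∃ i, ∀ z ∈ Z, key i y ≤ key i z

open Classical in
lemma scarf_maxset_card {V O : Type*} [Fintype V] [LinearOrder O] (k : V → O)
    (hk : Function.Injective k) (A : Finset V) :
    (A.filter (fun x => ∀ y ∈ A, k y ≤ k x)).card = if A.Nonempty then 1 else 0 := by
  split_ifs with h
  · obtain ⟨x, hx, hmax⟩ := A.exists_max_image k h
    rw [Finset.card_eq_one]
    refine ⟨x, ?_⟩
    ext y
    simp only [Finset.mem_filter, Finset.mem_singleton]
    constructor
    · rintro ⟨hy, hy2⟩
      exact hk (le_antisymm (hmax y hy) (hy2 x hx))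
    · rintro rfl
      exact ⟨hx, hmax⟩
  · rw [Finset.not_nonempty_iff_eq_empty] at h
    simp [h]

open Classical in
lemma scarf_door {V I O : Type*} [Fintype V] [Fintype I] [LinearOrder O] (key : I → V → O)
    (hinj : ∀ i, Function.Injective (key i)) (d : Finset V) (hd : ScDom key d)
    (hne : d.Nonempty) (hcard : d.card + 1 = Fintype.card I) :
    ∃ m : I → V, (∀ i, m i ∈ d) ∧ (∀ i, ∀ z ∈ d, key i (m i) ≤ key i z) ∧
    ∃ j k, j ≠ k ∧ m j = m k ∧
      (Finset.univ.filter (fun x => x ∉ d ∧ ScDom key (insert x d))).card =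
        (if (∃ y, ∀ i, i ≠ j → key i (m i) < key i y) then 1 else 0) +
        (if (∃ y, ∀ i, i ≠ k → key i (m i) < key i y) then 1 else 0) := by
  have hmin : ∀ i, ∃ x ∈ d, ∀ z ∈ d, key i x ≤ key i z := fun i => d.exists_min_image (key i) hne
  choose m hmd hm using hmin
  refine ⟨m, hmd, hm, ?_⟩
  have hmeq : ∀ i, ∀ z ∈ d, (∀ w ∈ d, key i z ≤ key i w) → m i = z := fun i z hz h =>
    hinj i (le_antisymm (hm i z hz) (h _ (hmd i)))
  have hsurj : ∀ z ∈ d, ∃ i, m i = z := by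
    intro z hz
    obtain ⟨i, hi⟩ := hd z
    exact ⟨i, hmeq i z hz hi⟩
  obtain ⟨j, -, k, -, hjk, hmjk⟩ := Finset.exists_ne_map_eq_of_card_lt_of_maps_to
    (s := (Finset.univ : Finset I)) (t := d) (by rw [Finset.card_univ]; omega)
    (f := m) (fun i _ => hmd i)
  have hinjOn : ∀ l, l = j ∨ l = k → ∀ a b, a ≠ l → b ≠ l → m a = m b → a = b := by
    intro l hl a b ha hb hab
    have hcd : (Finset.univ.erase l).card = d.card := by
      rw [Finset.card_erase_of_mem (Finset.mem_univ _), Finset.card_univ]; omega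
    have himg : (Finset.univ.erase l).image m = d := by
      ext z
      simp only [Finset.mem_image, Finset.mem_erase, Finset.mem_univ, and_true]
      constructor
      · rintro ⟨a, -, rfl⟩; exact hmd a
      · intro hz
        obtain ⟨i, rfl⟩ := hsurj z hz
        by_cases hil : i = l
        · rcases hl with rfl | rfl
          · exact ⟨k, hjk.symm, by rw [hil, hmjk]⟩
          · exact ⟨j, hjk, by rw [hil, hmjk]⟩
        · exact ⟨i, hil, rfl⟩
    have := Finset.card_image_iff.1 (by rw [himg, hcd] : ((Finset.univ.erase l).image m).card = _)
    exact this (by simp [ha]) (by simp [hb]) hab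
  have hother : ∀ l, l = j ∨ l = k → ∃ l', l' ≠ l ∧ m l' = m l := by
    rintro l (rfl | rfl)
    · exact ⟨k, hjk.symm, hmjk.symm⟩
    · exact ⟨j, hjk, hmjk⟩
  refine ⟨j, k, hjk, hmjk, ?_⟩
  let A : I → Finset V := fun l => Finset.univ.filter (fun y => ∀ i, i ≠ l → key i (m i) < key i y)
  have hA : ∀ l y, y ∈ A l ↔ ∀ i, i ≠ l → key i (m i) < key i y := by intro l y; simp [A]
  let B : I → Finset V := fun l => (A l).filter (fun x => ∀ y ∈ A l, key l y ≤ key l x)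
  have hAl : ∀ l, ∀ y ∈ A l, ∀ z ∈ d, key l y ≤ key l z := by
    intro l y hy z hz
    obtain ⟨i, hi⟩ := hd y
    by_cases hil : i = l
    · subst hil; exact hi z hz
    · exact absurd (hi _ (hmd i)) (not_le.2 ((hA l y).1 hy i hil))
  have hAd : ∀ l, l = j ∨ l = k → ∀ x ∈ A l, x ∉ d := by
    intro l hl x hx hxd
    obtain ⟨i, rfl⟩ := hsurj x hxd
    by_cases hil : i = l
    · obtain ⟨l', h1, h2⟩ := hother l hl
      have := (hA l _).1 hx l' h1
      rw [h2, hil] at this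
      exact lt_irrefl _ this
    · exact lt_irrefl _ ((hA l _).1 hx i hil)
  have key1 : Finset.univ.filter (fun x => x ∉ d ∧ ScDom key (insert x d)) = B j ∪ B k := by
    ext x
    simp only [Finset.mem_filter, Finset.mem_univ, true_and, Finset.mem_union]
    constructor
    · rintro ⟨hxd, hdom⟩
      obtain ⟨l, hl⟩ := hdom x
      have hz : ∀ z ∈ d, ∃ i, m i = z ∧ key i (m i) < key i x := by
        intro z hz
        obtain ⟨i, hi⟩ := hdom z
        have h1 : m i = z := hmeq i z hz (fun w hw => hi w (Finset.mem_insert_of_mem hw))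
        refine ⟨i, h1, ?_⟩
        rw [h1]
        refine lt_of_le_of_ne (hi x (Finset.mem_insert_self _ _)) ?_
        intro h
        exact hxd (hinj i h ▸ hz)
      have hlx : key l x ≤ key l (m l) := hl _ (Finset.mem_insert_of_mem (hmd l))
      have hljk : l = j ∨ l = k := by
        by_contra hcon
        push Not at hcon
        obtain ⟨i, hi1, hi2⟩ := hz (m l) (hmd l)
        have hil : i ≠ l := by rintro rfl; exact absurd hlx (not_le.2 hi2)
        by_cases hij : i = j
        · exact hil (hinjOn k (Or.inr rfl) i l (by rw [hij]; exact hjk) hcon.2 hi1)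
        · exact hil (hinjOn j (Or.inl rfl) i l hij hcon.1 hi1)
      have hxA : x ∈ A l := by
        rw [hA]
        intro i hil
        obtain ⟨i', h1, h2⟩ := hz (m i) (hmd i)
        have hi'l : i' ≠ l := by rintro rfl; exact absurd hlx (not_le.2 h2)
        have := hinjOn l hljk i' i hi'l hil h1
        subst this
        exact h2
      have hxB : x ∈ B l := by
        simp only [B, Finset.mem_filter]
        refine ⟨hxA, fun y hy => ?_⟩
        obtain ⟨i, hi⟩ := hdom y
        by_cases hil : i = l
        · subst hil; exact hi x (Finset.mem_insert_self _ _)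
        · exact absurd (hi _ (Finset.mem_insert_of_mem (hmd i))) (not_le.2 ((hA l y).1 hy i hil))
      rcases hljk with rfl | rfl
      · exact Or.inl hxB
      · exact Or.inr hxB
    · intro h
      have : ∃ l, (l = j ∨ l = k) ∧ x ∈ B l := by
        rcases h with h | h
        · exact ⟨j, Or.inl rfl, h⟩
        · exact ⟨k, Or.inr rfl, h⟩
      obtain ⟨l, hl, hx⟩ := this
      simp only [B, Finset.mem_filter] at hx
      obtain ⟨hxA, hxm⟩ := hx
      refine ⟨hAd l hl x hxA, fun y => ?_⟩
      by_cases hy : y ∈ A l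
      · refine ⟨l, fun z hz => ?_⟩
        rcases Finset.mem_insert.1 hz with rfl | hz
        · exact hxm y hy
        · exact hAl l y hy z hz
      · rw [hA] at hy
        push Not at hy
        obtain ⟨i, hil, hi⟩ := hy
        refine ⟨i, fun z hz => ?_⟩
        rcases Finset.mem_insert.1 hz with rfl | hz
        · exact hi.trans ((hA l _).1 hxA i hil).le
        · exact hi.trans (hm i z hz)
  have hdisj : Disjoint (B j) (B k) := by
    rw [Finset.disjoint_left]
    intro x hx hx'
    simp only [B, Finset.mem_filter] at hx hx'
    have h1 := (hA j x).1 hx.1 k hjk.symm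
    have h2 := hAl k x hx'.1 _ (hmd k)
    exact absurd h1 (not_lt.2 h2)
  rw [key1, Finset.card_union_of_disjoint hdisj, scarf_maxset_card _ (hinj j), 
    scarf_maxset_card _ (hinj k)]
  have hAne : ∀ l, (A l).Nonempty ↔ ∃ y, ∀ i, i ≠ l → key i (m i) < key i y := by
    intro l
    simp only [Finset.Nonempty, hA]
  simp only [hAne]

open Classical in
theorem scarf {V I O : Type*} [Fintype V] [Fintype I] [LinearOrder O] (key : I → V → O)
    (hinj : ∀ i, Function.Injective (key i)) (s : I → V) (hs : Function.Injective s)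
    (h1 : ∀ i v, key i (s i) ≤ key i v)
    (h2 : ∀ i j, j ≠ i → ∀ v, v ∉ Set.range s → key i v < key i (s j))
    (t : V) (ht : t ∉ Set.range s) (c : V → I) (hc : ∀ i, c (s i) = i)
    (hI : 2 ≤ Fintype.card I) :
    ∃ Z : Finset V, Z.card = Fintype.card I ∧ ScDom key Z ∧ Z.image c = Finset.univ := by
  by_contra hno
  push Not at hno
  have : Nonempty I := Fintype.card_pos_iff.1 (by omega)
  obtain ⟨i0⟩ := this
  let rooms : Finset (Finset V) := Finset.univ.filter
    (fun Z => Z.card = Fintype.card I ∧ ScDom key Z)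
  let doors : Finset (Finset V) := Finset.univ.filter
    (fun Z => Z.card + 1 = Fintype.card I ∧ ScDom key Z ∧ Z.image c = Finset.univ.erase i0)
  have hcount := Finset.sum_card_bipartiteAbove_eq_sum_card_bipartiteBelow
    (s := doors) (t := rooms) (r := fun d r => d ⊆ r)
  -- room side
  have hroom : Even (∑ r ∈ rooms, (doors.bipartiteBelow (fun d r => d ⊆ r) r).card) := by
    refine Finset.even_sum _ fun r hr => ?_
    simp only [rooms, Finset.mem_filter, Finset.mem_univ, true_and] at hr
    obtain ⟨hrc, hrd⟩ := hr
    have hE : doors.bipartiteBelow (fun d r => d ⊆ r) r =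
        (r.filter (fun x => (r.erase x).image c = Finset.univ.erase i0)).image r.erase := by
      ext d
      simp only [Finset.mem_bipartiteBelow, doors, Finset.mem_filter, Finset.mem_univ, true_and,
        Finset.mem_image]
      constructor
      · rintro ⟨⟨hdc, hdd, hdi⟩, hdr⟩
        have hcc : (r \ d).card = 1 := by
          rw [Finset.card_sdiff_of_subset hdr]; omega
        obtain ⟨x, hx⟩ := Finset.card_eq_one.1 hcc
        have hxr : x ∈ r \ d := by rw [hx]; simp
        have hdx : r.erase x = d := by
          rw [← Finset.sdiff_singleton_eq_erase, ← hx, Finset.sdiff_sdiff_eq_self hdr]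
        exact ⟨x, ⟨(Finset.mem_sdiff.1 hxr).1, by rw [hdx, hdi]⟩, hdx⟩
      · rintro ⟨x, ⟨hxr, hxi⟩, rfl⟩
        refine ⟨⟨?_, ?_, hxi⟩, Finset.erase_subset _ _⟩
        · rw [Finset.card_erase_of_mem hxr]
          have := Finset.card_pos.2 ⟨x, hxr⟩
          omega
        · intro y
          obtain ⟨i, hi⟩ := hrd y
          exact ⟨i, fun z hz => hi z (Finset.mem_of_mem_erase hz)⟩
    rw [hE, Finset.card_image_of_injOn]
    swap
    · intro x hx y hy hxy
      simp only [Finset.coe_filter, Set.mem_ofPred_eq] at hx hy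
      exact (Finset.erase_inj r hx.1).1 hxy
    rcases Finset.eq_empty_or_nonempty
      (r.filter (fun x => (r.erase x).image c = Finset.univ.erase i0)) with he | ⟨x, hx⟩
    · rw [he]; simp
    · rw [Finset.mem_filter] at hx
      obtain ⟨hxr, hxi⟩ := hx
      have hrimg : r.image c = insert (c x) (Finset.univ.erase i0) := by
        rw [← hxi, ← Finset.image_insert, Finset.insert_erase hxr]
      have hcx : c x ≠ i0 := by
        intro h
        refine hno r hrc hrd ?_
        rw [hrimg, h, Finset.insert_erase (Finset.mem_univ _)]
      have hxinj : Set.InjOn c (r.erase x) := by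
        apply Finset.card_image_iff.1
        rw [hxi, Finset.card_erase_of_mem (Finset.mem_univ _), Finset.card_erase_of_mem hxr, hrc,
          Finset.card_univ]
      have : c x ∈ (r.erase x).image c := by rw [hxi]; simp [hcx]
      obtain ⟨y, hy, hyx⟩ := Finset.mem_image.1 this
      have hyr := Finset.mem_of_mem_erase hy
      have hyne := Finset.ne_of_mem_erase hy
      have : r.filter (fun x => (r.erase x).image c = Finset.univ.erase i0) = {x, y} := by
        ext z
        simp only [Finset.mem_filter, Finset.mem_insert, Finset.mem_singleton]
        constructor
        · rintro ⟨hzr, hzi⟩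
          by_contra hcon
          push Not at hcon
          have hzinj : Set.InjOn c (r.erase z) := by
            apply Finset.card_image_iff.1
            rw [hzi, Finset.card_erase_of_mem (Finset.mem_univ _), Finset.card_erase_of_mem hzr, hrc,
              Finset.card_univ]
          exact hyne (hzinj (by simp [hyr, hcon.2.symm]) (by simp [hxr, hcon.1.symm]) hyx)
        · rintro (rfl | rfl)
          · exact ⟨hxr, hxi⟩
          · refine ⟨hyr, ?_⟩
            rw [← hxi]
            ext i
            simp only [Finset.mem_image, Finset.mem_erase]
            constructor
            · rintro ⟨w, ⟨hw1, hw2⟩, rfl⟩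
              by_cases hwx : w = x
              · exact ⟨z, ⟨hyne, hyr⟩, by rw [hwx, hyx]⟩
              · exact ⟨w, ⟨hwx, hw2⟩, rfl⟩
            · rintro ⟨w, ⟨hw1, hw2⟩, rfl⟩
              by_cases hwx : w = z
              · exact ⟨x, ⟨hyne.symm, hxr⟩, by rw [hwx, hyx]⟩
              · exact ⟨w, ⟨hwx, hw2⟩, rfl⟩
      rw [this, Finset.card_pair hyne.symm]
      exact even_two
  -- door side
  have hdoorcount : ∀ d ∈ doors, (rooms.bipartiteAbove (fun d r => d ⊆ r) d).card =
      (Finset.univ.filter (fun x => x ∉ d ∧ ScDom key (insert x d))).card := by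
    intro d hd
    simp only [doors, Finset.mem_filter, Finset.mem_univ, true_and] at hd
    symm
    apply Finset.card_bij (fun x _ => insert x d)
    · intro x hx
      simp only [Finset.mem_filter, Finset.mem_univ, true_and] at hx
      simp only [Finset.mem_bipartiteAbove, rooms, Finset.mem_filter, Finset.mem_univ, true_and]
      refine ⟨⟨?_, hx.2⟩, Finset.subset_insert _ _⟩
      rw [Finset.card_insert_of_notMem hx.1, hd.1]
    · intro x hx y hy hxy
      simp only [Finset.mem_filter, Finset.mem_univ, true_and] at hx hy
      exact (Finset.insert_inj hx.1).1 hxy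
    · intro r hr
      simp only [Finset.mem_bipartiteAbove, rooms, Finset.mem_filter, Finset.mem_univ, true_and] at hr
      obtain ⟨⟨hrc, hrd⟩, hdr⟩ := hr
      have hcc : (r \ d).card = 1 := by
        rw [Finset.card_sdiff_of_subset hdr]; omega
      obtain ⟨x, hx⟩ := Finset.card_eq_one.1 hcc
      have hxr : x ∈ r \ d := by rw [hx]; simp
      have hdx : insert x d = r := by
        rw [Finset.insert_eq, ← hx, Finset.sdiff_union_of_subset hdr]
      refine ⟨x, ?_, hdx⟩
      simp only [Finset.mem_filter, Finset.mem_univ, true_and]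
      exact ⟨(Finset.mem_sdiff.1 hxr).2, by rw [hdx]; exact hrd⟩
  let S0 : Finset V := (Finset.univ.erase i0).image s
  have hS0c : S0.card + 1 = Fintype.card I := by
    simp only [S0]
    rw [Finset.card_image_of_injective _ hs, Finset.card_erase_of_mem (Finset.mem_univ _),
      Finset.card_univ]
    omega
  have hS0mem : S0 ∈ doors := by
    simp only [doors, Finset.mem_filter, Finset.mem_univ, true_and]
    refine ⟨hS0c, ?_, ?_⟩
    · intro y
      by_cases hy : y ∈ Set.range s
      · obtain ⟨i, rfl⟩ := hy
        exact ⟨i, fun z _ => h1 i z⟩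
      · refine ⟨i0, fun z hz => ?_⟩
        simp only [S0, Finset.mem_image, Finset.mem_erase, Finset.mem_univ, and_true] at hz
        obtain ⟨j, hj, rfl⟩ := hz
        exact (h2 i0 j hj y hy).le
    · simp only [S0, Finset.image_image]
      have : c ∘ s = id := funext hc
      rw [this, Finset.image_id]
  have hdne : ∀ d : Finset V, d.card + 1 = Fintype.card I → d.Nonempty := by
    intro d hd
    rw [← Finset.card_pos]; omega
  have hS0odd : (rooms.bipartiteAbove (fun d r => d ⊆ r) S0).card = 1 := by
    rw [hdoorcount S0 hS0mem]
    have hS0d : ScDom key S0 := by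
      have := hS0mem
      simp only [doors, Finset.mem_filter, Finset.mem_univ, true_and] at this
      exact this.2.1
    obtain ⟨m, hmd, hm, j, k, hjk, hmjk, hcard⟩ :=
      scarf_door key hinj S0 hS0d (hdne _ hS0c) hS0c
    have hms : ∀ i, i ≠ i0 → m i = s i := by
      intro i hi
      apply hinj i
      refine le_antisymm (hm i _ ?_) (h1 i _)
      exact Finset.mem_image_of_mem _ (by simp [hi])
    have hex : ∃ y, ∀ i, i ≠ i0 → key i (m i) < key i y := by
      refine ⟨t, fun i hi => ?_⟩
      rw [hms i hi]
      exact lt_of_le_of_ne (h1 i t) (fun h => ht ⟨i, hinj i h⟩)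
    have hnex : ∀ j, j ≠ i0 → m i0 = m j → ¬ ∃ y, ∀ i, i ≠ j → key i (m i) < key i y := by
      rintro j hj hmj ⟨y, hy⟩
      have hy0 := hy i0 hj.symm
      rw [hmj, hms j hj] at hy0
      by_cases hyr : y ∈ Set.range s
      · obtain ⟨i, rfl⟩ := hyr
        by_cases hi0 : i = i0
        · subst hi0
          exact absurd hy0 (not_lt.2 (h1 _ _))
        · by_cases hij : i = j
          · subst hij; exact lt_irrefl _ hy0
          · have := hy i hij
            rw [hms i hi0] at this
            exact lt_irrefl _ this
      · exact absurd hy0 (not_lt.2 (h2 i0 j hj y hyr).le)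
    by_cases hj : j = i0
    · subst hj
      rw [hcard, if_pos hex, if_neg (hnex k hjk.symm hmjk)]
    · have hk : k = i0 := by
        by_contra hk
        rw [hms j hj, hms k hk] at hmjk
        exact hjk (hs hmjk)
      subst hk
      rw [hcard, if_pos hex, if_neg (hnex j hj hmjk.symm)]
  have hother : ∀ d ∈ doors, d ≠ S0 →
      (rooms.bipartiteAbove (fun d r => d ⊆ r) d).card = 2 := by
    intro d hdm hdS
    rw [hdoorcount d hdm]
    simp only [doors, Finset.mem_filter, Finset.mem_univ, true_and] at hdm
    obtain ⟨hdc, hdd, hdi⟩ := hdm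
    obtain ⟨m, hmd, hm, j, k, hjk, hmjk, hcard⟩ :=
      scarf_door key hinj d hdd (hdne _ hdc) hdc
    have hex : ∀ l, ∃ y, ∀ i, i ≠ l → key i (m i) < key i y := by
      intro l
      refine ⟨s l, fun i hil => ?_⟩
      by_cases hmi : m i ∈ Set.range s
      · obtain ⟨i', hi'⟩ := hmi
        by_cases hii : i' = i
        · subst hii
          rw [← hi']
          exact lt_of_le_of_ne (h1 _ _) (fun h => hil (hs (hinj _ h)))
        · exfalso
          have hsub : d ⊆ (Finset.univ.erase i).image s := by
            intro z hz
            by_cases hzr : z ∈ Set.range s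
            · obtain ⟨a, rfl⟩ := hzr
              refine Finset.mem_image_of_mem _ ?_
              simp only [Finset.mem_erase, Finset.mem_univ, and_true]
              rintro rfl
              have h3 := hm a _ hz
              have := hinj a (le_antisymm h3 (h1 a _))
              rw [← hi'] at this
              exact hii (hs this)
            · have h3 := h2 i i' hii z hzr
              rw [hi'] at h3
              exact absurd (hm i z hz) (not_le.2 h3)
          have himg : d.image c ⊆ Finset.univ.erase i := by
            intro a ha
            obtain ⟨z, hz, rfl⟩ := Finset.mem_image.1 ha
            obtain ⟨b, hb, rfl⟩ := Finset.mem_image.1 (hsub hz)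
            rw [hc]; exact hb
          have hi0 : i = i0 := by
            by_contra hne
            have : i ∈ d.image c := by rw [hdi]; simp [hne]
            have := himg this
            simp at this
          subst hi0
          exact hdS (Finset.eq_of_subset_of_card_le hsub (by show S0.card ≤ _; omega))
      · exact h2 i l hil.symm _ hmi
    rw [hcard, if_pos (hex j), if_pos (hex k)]
  rw [← hcount, ← Finset.add_sum_erase _ _ hS0mem, hS0odd] at hroom
  have : Even (∑ d ∈ doors.erase S0, (rooms.bipartiteAbove (fun d r => d ⊆ r) d).card) := by
    refine Finset.even_sum _ fun d hd => ?_
    rw [hother d (Finset.mem_of_mem_erase hd) (Finset.ne_of_mem_erase hd)]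
    exact even_two
  rw [Nat.even_add] at hroom
  exact absurd (hroom.2 this) (by decide)

end Scarf

section Brouwer
open Filter Topology

/-- grid points of the simplex -/
abbrev GridPt (I : Type*) [Fintype I] (N : ℕ) := {a : I → Fin (N + 1) // ∑ i, (a i : ℕ) = N}

open Classical in
lemma grid_scarf {I : Type*} [Fintype I] (hI : 2 ≤ Fintype.card I) (N : ℕ)
    (c : GridPt I N → I) :
    ∃ a : GridPt I N, ∀ i, (a.1 i : ℕ) ≤ Fintype.card I ∨
      ∃ y : GridPt I N, c y = i ∧ ∀ l, (y.1 l : ℕ) ≤ a.1 l + Fintype.card I ∧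
        (a.1 l : ℕ) ≤ y.1 l + Fintype.card I := by
  have hne : Nonempty I := Fintype.card_pos_iff.1 (by omega)
  let T := GridPt I N
  let e : T ≃ Fin (Fintype.card T) := Fintype.equivFin T
  let e' : I ≃ Fin (Fintype.card I) := Fintype.equivFin I
  let key : I → T ⊕ I → ℕ ×ₗ ℕ := fun i v => match v with
    | Sum.inl a => toLex (1 + (a.1 i : ℕ), (e a : ℕ))
    | Sum.inr j => if j = i then toLex (0, 0) else toLex (N + 2, (e' j : ℕ))
  have hkl : ∀ i (a : T), key i (Sum.inl a) = toLex (1 + (a.1 i : ℕ), (e a : ℕ)) := fun _ _ => rfl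
  have hkr : ∀ i j, key i (Sum.inr j) =
    if j = i then toLex (0, 0) else toLex (N + 2, (e' j : ℕ)) := fun _ _ => rfl
  have hb : ∀ i (a : T), (a.1 i : ℕ) < N + 1 := fun i a => (a.1 i).2
  have hinj : ∀ i, Function.Injective (key i) := by
    intro i v w hvw
    rcases v with a | j <;> rcases w with b | k
    · rw [hkl, hkl, toLex_inj, Prod.mk.injEq] at hvw
      rw [e.injective (Fin.ext hvw.2)]
    · rw [hkl, hkr] at hvw
      have := hb i a
      split_ifs at hvw <;> rw [toLex_inj, Prod.mk.injEq] at hvw <;> omega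
    · rw [hkl, hkr] at hvw
      have := hb i b
      split_ifs at hvw <;> rw [toLex_inj, Prod.mk.injEq] at hvw <;> omega
    · rw [hkr, hkr] at hvw
      split_ifs at hvw with h1 h2 h2
      · rw [h1, h2]
      · rw [toLex_inj, Prod.mk.injEq] at hvw; omega
      · rw [toLex_inj, Prod.mk.injEq] at hvw; omega
      · rw [toLex_inj, Prod.mk.injEq] at hvw
        rw [e'.injective (Fin.ext hvw.2)]
  obtain ⟨i1⟩ := id hne
  let t0 : T := ⟨fun i => if i = i1 then Fin.last N else 0, by
    have : ∀ i, (((if i = i1 then Fin.last N else 0 : Fin (N+1))) : ℕ) = if i = i1 then N else 0 := by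
      intro i; split_ifs <;> simp
    simp [this]⟩
  obtain ⟨Z, hZc, hZd, hZi⟩ := scarf key hinj (Sum.inr : I → T ⊕ I) Sum.inr_injective
    (by
      intro i v
      rw [hkr, if_pos rfl]
      rcases v with a | j
      · rw [hkl, Prod.Lex.toLex_le_toLex]; left; simp
      · rw [hkr]; split_ifs
        · exact le_rfl
        · rw [Prod.Lex.toLex_le_toLex]; left; simp)
    (by
      intro i j hj v hv
      rcases v with a | k
      · rw [hkl, hkr, if_neg hj, Prod.Lex.toLex_lt_toLex]
        left
        have := hb i a
        show 1 + (a.1 i : ℕ) < N + 2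
        omega
      · exact absurd ⟨k, rfl⟩ hv)
    (Sum.inl t0) (by rintro ⟨i, hi⟩; cases hi)
    (Sum.elim c id) (fun i => rfl) hI
  have hkle : ∀ i (a b : T), key i (Sum.inl a) ≤ key i (Sum.inl b) → (a.1 i : ℕ) ≤ b.1 i := by
    intro i a b h
    rw [hkl, hkl, Prod.Lex.toLex_le_toLex] at h
    simp only at h
    omega
  have hknot : ∀ i (a : T), ¬ key i (Sum.inl a) ≤ key i (Sum.inr i) := by
    intro i a h
    rw [hkl, hkr, if_pos rfl, Prod.Lex.toLex_le_toLex] at h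
    simp only at h
    omega
  -- some grid point in Z
  have hC : ∃ i, Sum.inr i ∉ Z := by
    by_contra hcon
    push Not at hcon
    obtain ⟨i, hi⟩ := hZd (Sum.inl t0)
    exact hknot i t0 (hi _ (hcon i))
  obtain ⟨i2, hi2⟩ := hC
  have hP : ∃ a : T, Sum.inl a ∈ Z := by
    have : i2 ∈ Z.image (Sum.elim c id) := by rw [hZi]; simp
    obtain ⟨z, hz, hzi⟩ := Finset.mem_image.1 this
    rcases z with a | j
    · exact ⟨a, hz⟩
    · simp only [Sum.elim_inr, id] at hzi
      subst hzi
      exact absurd hz hi2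
  obtain ⟨a0, ha0⟩ := hP
  let ZT : Finset T := Finset.univ.filter (fun a => Sum.inl a ∈ Z)
  have hZT : ∀ a, a ∈ ZT ↔ Sum.inl a ∈ Z := by intro a; simp [ZT]
  have hmin : ∀ i, ∃ x ∈ ZT, ∀ z ∈ ZT, (x.1 i : ℕ) ≤ z.1 i := fun i =>
    ZT.exists_min_image (fun x => (x.1 i : ℕ)) ⟨a0, (hZT _).2 ha0⟩
  choose p hpZ hp using hmin
  let m : I → ℕ := fun i => if Sum.inr i ∈ Z then 0 else ((p i).1 i : ℕ)
  have hmle : ∀ i, ∀ z ∈ ZT, m i ≤ z.1 i := by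
    intro i z hz
    simp only [m]
    split_ifs
    · simp
    · exact hp i z hz
  have hsum : N < ∑ i, (m i + 1) := by
    by_contra hcon
    push Not at hcon
    let y : I → ℕ := fun i => m i + 1 + if i = i2 then N - ∑ i, (m i + 1) else 0
    have hys : ∑ i, y i = N := by
      simp only [y]
      rw [Finset.sum_add_distrib]
      simp only [Finset.sum_ite_eq', Finset.mem_univ, if_true]
      omega
    have hyle : ∀ i, y i < N + 1 := by
      intro i
      have := Finset.single_le_sum (f := y) (fun j _ => Nat.zero_le _) (Finset.mem_univ i)
      omega
    let yy : T := ⟨fun i => ⟨y i, hyle i⟩, hys⟩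
    obtain ⟨i, hi⟩ := hZd (Sum.inl yy)
    by_cases hiZ : Sum.inr i ∈ Z
    · exact hknot i yy (hi _ hiZ)
    · have h1 := hkle i yy (p i) (hi _ ((hZT _).1 (hpZ i)))
      have h2 : (yy.1 i : ℕ) = m i + 1 + if i = i2 then N - ∑ i, (m i + 1) else 0 := rfl
      have h3 : m i = ((p i).1 i : ℕ) := by simp only [m, if_neg hiZ]
      omega
  have hup : ∀ z ∈ ZT, ∀ l, (z.1 l : ℕ) ≤ m l + Fintype.card I := by
    intro z hz l
    have h1 : ∑ i, ((z.1 i : ℕ) - m i) + ∑ i, m i = N := by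
      rw [← Finset.sum_add_distrib]
      refine Eq.trans ?_ z.2
      refine Finset.sum_congr rfl fun i _ => ?_
      have := hmle i z hz
      omega
    have h2 := Finset.single_le_sum (f := fun i => (z.1 i : ℕ) - m i)
      (fun j _ => Nat.zero_le _) (Finset.mem_univ l)
    rw [Finset.sum_add_distrib] at hsum
    simp at hsum h2
    omega
  refine ⟨a0, fun i => ?_⟩
  by_cases hiZ : Sum.inr i ∈ Z
  · left
    have := hup a0 ((hZT _).2 ha0) i
    simp only [m, if_pos hiZ] at this
    omega
  · right
    have : i ∈ Z.image (Sum.elim c id) := by rw [hZi]; simp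
    obtain ⟨z, hz, hzi⟩ := Finset.mem_image.1 this
    rcases z with y | j
    · refine ⟨y, hzi, fun l => ?_⟩
      have h1 := hup a0 ((hZT _).2 ha0) l
      have h2 := hup y ((hZT _).2 hz) l
      have h3 := hmle l a0 ((hZT _).2 ha0)
      have h4 := hmle l y ((hZT _).2 hz)
      omega
    · simp only [Sum.elim_inr, id] at hzi
      subst hzi
      exact absurd hz hiZ

theorem brouwer_simplex {I : Type*} [Fintype I] (hI : 2 ≤ Fintype.card I)
    (F : (I → ℝ) → (I → ℝ)) (hF : ContinuousOn F (stdSimplex ℝ I))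
    (hmaps : ∀ x ∈ stdSimplex ℝ I, F x ∈ stdSimplex ℝ I) :
    ∃ x ∈ stdSimplex ℝ I, F x = x := by
  classical
  have hne : Nonempty I := Fintype.card_pos_iff.1 (by omega)
  set n : ℝ := (Fintype.card I : ℝ) with hn
  have happ : ∀ N : ℕ, ∃ x ∈ stdSimplex ℝ I, ∀ i, ∃ y ∈ stdSimplex ℝ I,
      dist y x ≤ n / (N + 1 : ℕ) ∧ y i ≤ F y i + n / (N + 1 : ℕ) := by
    intro N
    have hN : (0:ℝ) < (N + 1 : ℕ) := by positivity
    let q : GridPt I (N + 1) → (I → ℝ) := fun a i => (a.1 i : ℕ) / ((N + 1 : ℕ) : ℝ)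
    have hq : ∀ a, q a ∈ stdSimplex ℝ I := by
      intro a
      refine ⟨fun i => by positivity, ?_⟩
      simp only [q]
      rw [← Finset.sum_div, ← Nat.cast_sum, a.2, div_self hN.ne']
    have hcol : ∀ a, ∃ i, q a i ≤ F (q a) i := by
      intro a
      by_contra hcon
      push Not at hcon
      have := Finset.sum_lt_sum_of_nonempty (s := Finset.univ) Finset.univ_nonempty
        (fun i _ => hcon i)
      rw [(hq a).2, (hmaps _ (hq a)).2] at this
      exact lt_irrefl _ this
    choose c hc using hcol
    obtain ⟨a, ha⟩ := grid_scarf hI (N + 1) c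
    refine ⟨q a, hq a, fun i => ?_⟩
    rcases ha i with h | ⟨y, rfl, hy⟩
    · refine ⟨q a, hq a, by rw [dist_self]; positivity, ?_⟩
      have h1 := (hmaps _ (hq a)).1 i
      have h2 : q a i ≤ n / (N + 1 : ℕ) := by
        simp only [q]
        gcongr
        rw [hn]
        exact_mod_cast h
      linarith
    · refine ⟨q y, hq y, ?_, ?_⟩
      · rw [dist_pi_le_iff (by positivity)]
        intro l
        simp only [q]
        rw [Real.dist_eq, ← sub_div, abs_div, abs_of_pos hN]
        gcongr
        rw [abs_le]
        have h1 : ((y.1 l : ℕ) : ℝ) ≤ (a.1 l : ℕ) + n := by rw [hn]; exact_mod_cast (hy l).1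
        have h2 : ((a.1 l : ℕ) : ℝ) ≤ (y.1 l : ℕ) + n := by rw [hn]; exact_mod_cast (hy l).2
        constructor <;> linarith
      · have : 0 ≤ n / (N + 1 : ℕ) := by positivity
        linarith [hc y]
  choose x hx y hy hyx hyF using happ
  obtain ⟨x0, hx0, φ, hφ, hlim⟩ := (isCompact_stdSimplex ℝ I).tendsto_subseq hx
  have hzero : Tendsto (fun N : ℕ => n / (N + 1 : ℕ)) atTop (𝓝 0) :=
    ((tendsto_const_div_atTop_nhds_zero_nat n).comp (tendsto_add_atTop_nat 1))
  have hzφ := hzero.comp hφ.tendsto_atTop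
  have hle : ∀ i, x0 i ≤ F x0 i := by
    intro i
    have hylim : Tendsto (fun N => y (φ N) i) atTop (𝓝 x0) := by
      refine (tendsto_iff_of_dist ?_).1 hlim
      refine squeeze_zero (fun _ => dist_nonneg) (fun N => ?_) hzφ
      rw [dist_comm]
      exact hyx (φ N) i
    have hFlim : Tendsto (fun N => F (y (φ N) i)) atTop (𝓝 (F x0)) := by
      refine (hF x0 hx0).tendsto.comp ?_
      exact tendsto_nhdsWithin_iff.2 ⟨hylim, Eventually.of_forall fun N => hy _ _⟩
    have h1 := (tendsto_pi_nhds.1 hylim) i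
    have h2 := (tendsto_pi_nhds.1 hFlim) i
    have h3 := h2.add hzφ
    rw [add_zero] at h3
    exact le_of_tendsto_of_tendsto' h1 h3 (fun N => hyF (φ N) i)
  refine ⟨x0, hx0, ?_⟩
  have hsum : ∑ i, x0 i = ∑ i, F x0 i := by rw [hx0.2, (hmaps _ hx0).2]
  have := (Finset.sum_eq_sum_iff_of_le (fun i _ => hle i)).1 hsum
  funext i
  exact (this i (Finset.mem_univ i)).symm

end Brouwer

section Schauder
open Filter Topology

theorem schauder_approx {F : Type*} [NormedAddCommGroup F] [NormedSpace ℝ F] (C Q : Set F)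
    (hconv : Convex ℝ C) (hne : C.Nonempty) (G : F → F)
    (hG : ContinuousOn G C) (hmaps : ∀ x ∈ C, G x ∈ C) (hQ : IsCompact Q)
    (hGQ : ∀ x ∈ C, G x ∈ Q) (ε : ℝ) (hε : 0 < ε) : ∃ x ∈ C, dist x (G x) ≤ ε := by
  classical
  have htb : TotallyBounded (G '' C) :=
    hQ.totallyBounded.subset (by rintro _ ⟨x, hx, rfl⟩; exact hGQ x hx)
  obtain ⟨t, htC, htfin, hcov⟩ := Metric.finite_approx_of_totallyBounded htb ε hε
  have hfin : Fintype t := htfin.fintype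
  have htne : Nonempty t := by
    obtain ⟨x, hx⟩ := hne
    have := hcov ⟨x, hx, rfl⟩
    simp only [Set.mem_iUnion] at this
    obtain ⟨y, hy, -⟩ := this
    exact ⟨⟨y, hy⟩⟩
  let I := t × Bool
  have hI : 2 ≤ Fintype.card I := by
    simp only [I, Fintype.card_prod, Fintype.card_bool]
    have := Fintype.card_pos (α := t)
    omega
  let y : I → F := fun i => i.1.1
  have hyC : ∀ i, y i ∈ C := by
    intro i
    obtain ⟨x, hx, hxe⟩ := htC i.1.2
    show i.1.1 ∈ C
    rw [← hxe]; exact hmaps x hx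
  let φ : I → F → ℝ := fun i z => max 0 (ε - dist z (y i))
  have hφc : ∀ i, Continuous (φ i) := by intro i; simp only [φ]; fun_prop
  have hφ0 : ∀ i z, 0 ≤ φ i z := fun i z => le_max_left _ _
  let S : F → ℝ := fun z => ∑ i, φ i z
  have hSc : Continuous S := by simp only [S]; exact continuous_finsetSum _ fun i _ => hφc i
  have hSpos : ∀ x ∈ C, 0 < S (G x) := by
    intro x hx
    have := hcov ⟨x, hx, rfl⟩
    simp only [Set.mem_iUnion] at this
    obtain ⟨z, hz, hd⟩ := this
    refine Finset.sum_pos' (fun i _ => hφ0 i _) ⟨(⟨z, hz⟩, true), Finset.mem_univ _, ?_⟩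
    rw [Metric.mem_ball] at hd
    exact lt_max_of_lt_right (by simp only [y]; linarith)
  let X : (I → ℝ) → F := fun a => ∑ i, a i • y i
  have hXc : Continuous X := by simp only [X]; fun_prop
  have hXC : ∀ a ∈ stdSimplex ℝ I, X a ∈ C := fun a ha =>
    hconv.sum_mem (fun i _ => ha.1 i) ha.2 (fun i _ => hyC i)
  obtain ⟨a, ha, hfix⟩ := brouwer_simplex hI (fun a i => φ i (G (X a)) / S (G (X a))) (by
      have h1 : ContinuousOn (fun a => G (X a)) (stdSimplex ℝ I) :=
        hG.comp hXc.continuousOn hXC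
      rw [continuousOn_pi]
      intro i
      exact ((hφc i).comp_continuousOn h1).div (hSc.comp_continuousOn h1)
        (fun a ha => (hSpos _ (hXC a ha)).ne'))
    (by
      intro a ha
      have := hSpos _ (hXC a ha)
      refine ⟨fun i => div_nonneg (hφ0 _ _) this.le, ?_⟩
      simp only
      rw [← Finset.sum_div, div_self this.ne'])
  refine ⟨X a, hXC a ha, ?_⟩
  have hS := hSpos _ (hXC a ha)
  have hx : X a - G (X a) = ∑ i, a i • (y i - G (X a)) := by
    simp only [smul_sub, Finset.sum_sub_distrib, ← Finset.sum_smul, ha.2, one_smul, X]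
  rw [dist_eq_norm, hx]
  refine (norm_sum_le _ _).trans ?_
  have : ∀ i ∈ Finset.univ, ‖a i • (y i - G (X a))‖ ≤ a i * ε := by
    intro i _
    rw [norm_smul, Real.norm_of_nonneg (ha.1 i)]
    by_cases h : dist (G (X a)) (y i) ≤ ε
    · rw [dist_comm, dist_eq_norm] at h
      exact mul_le_mul_of_nonneg_left h (ha.1 i)
    · have : a i = 0 := by
        rw [← hfix]
        simp only [φ]
        rw [max_eq_left (by linarith), zero_div]
      rw [this]; simp
  refine (Finset.sum_le_sum this).trans ?_
  rw [← Finset.sum_mul, ha.2, one_mul]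

theorem schauder {F : Type*} [NormedAddCommGroup F] [NormedSpace ℝ F] (C Q : Set F)
    (hconv : Convex ℝ C) (hclosed : IsClosed C) (hne : C.Nonempty) (G : F → F)
    (hG : ContinuousOn G C) (hmaps : ∀ x ∈ C, G x ∈ C) (hQ : IsCompact Q)
    (hGQ : ∀ x ∈ C, G x ∈ Q) : ∃ x ∈ C, G x = x := by
  have happ : ∀ n : ℕ, ∃ x ∈ C, dist x (G x) ≤ 1 / ((n : ℝ) + 1) := fun n =>
    schauder_approx C Q hconv hne G hG hmaps hQ hGQ _ (by positivity)
  choose x hx hd using happ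
  obtain ⟨z, hz, φ, hφ, hlim⟩ := hQ.tendsto_subseq (fun n => hGQ _ (hx n))
  have hzero := (tendsto_one_div_add_atTop_nhds_zero_nat (𝕜 := ℝ)).comp hφ.tendsto_atTop
  have hxlim : Tendsto (fun n => x (φ n)) atTop (𝓝 z) := by
    refine (tendsto_iff_of_dist ?_).1 hlim
    refine squeeze_zero (fun _ => dist_nonneg) (fun N => ?_) hzero
    rw [dist_comm]
    exact hd (φ N)
  have hzC : z ∈ C := hclosed.mem_of_tendsto hxlim (Eventually.of_forall fun n => hx _)
  refine ⟨z, hzC, ?_⟩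
  have h2 : Tendsto (fun n => G (x (φ n))) atTop (𝓝 (G z)) :=
    (hG z hzC).tendsto.comp (tendsto_nhdsWithin_iff.2 ⟨hxlim, Eventually.of_forall fun n => hx _⟩)
  exact tendsto_nhds_unique h2 hlim

theorem cone_expansion {E : Type*} [NormedAddCommGroup E] [NormedSpace ℝ E] (K : Set E)
    (hKc : IsClosed K) (hKadd : ∀ x ∈ K, ∀ y ∈ K, x + y ∈ K)
    (hKsmul : ∀ a : ℝ, 0 ≤ a → ∀ x ∈ K, a • x ∈ K)
    (ℓ : E →L[ℝ] ℝ) (e : E) (he : e ∈ K) (hle : ℓ e = 1)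
    (κ : ℝ) (hκ : 0 < κ) (hκℓ : ∀ x ∈ K, κ * ‖x‖ ≤ ℓ x)
    (gi go : E → ℝ) (hgic : Continuous gi) (hgoc : Continuous go)
    (hgih : ∀ a : ℝ, 0 ≤ a → ∀ x, gi (a • x) = a * gi x)
    (hgoh : ∀ a : ℝ, 0 ≤ a → ∀ x, go (a • x) = a * go x)
    (κ' L : ℝ) (hκ' : 0 < κ') (hgo : ∀ x ∈ K, κ' * ℓ x ≤ go x) (hgogi : ∀ x ∈ K, go x ≤ gi x)
    (hgi : ∀ x ∈ K, gi x ≤ L * ℓ x)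
    (T : E → E) (hT : Continuous T) (hTK : ∀ x ∈ K, T x ∈ K)
    (hTQ : ∀ R : ℝ, ∃ Q : Set E, IsCompact Q ∧ ∀ x, ‖x‖ ≤ R → T x ∈ Q)
    (hin : ∀ x ∈ K, gi x = 1 → ∀ μ : ℝ, 1 ≤ μ → T x ≠ μ • x)
    (hout : ∀ x ∈ K, go x = 1 → ∀ μ l : ℝ, 0 ≤ μ → μ ≤ 1 → 0 ≤ l → T x + l • e ≠ μ • x) :
    ∃ x ∈ K, 0 < ℓ x ∧ T x = x := by
  have hL : 0 < L := by
    have h1 := hgo e he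
    have h2 := hgi e he
    have h3 := hgogi e he
    rw [hle] at h1 h2
    linarith
  set C : Set (E × ℝ) := {p | p.1 ∈ K ∧ ℓ p.1 = 1 ∧ p.2 ∈ Set.Icc (0:ℝ) 1} with hCdef
  have hgop : ∀ p ∈ C, κ' ≤ go p.1 := by
    intro p hp; have := hgo _ hp.1; rwa [hp.2.1, mul_one] at this
  have hgip : ∀ p ∈ C, gi p.1 ≤ L := by
    intro p hp; have := hgi _ hp.1; rwa [hp.2.1, mul_one] at this
  have hgop' : ∀ p ∈ C, 0 < go p.1 := fun p hp => hκ'.trans_le (hgop p hp)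
  have hgip' : ∀ p ∈ C, 0 < gi p.1 := fun p hp => (hgop' p hp).trans_le (hgogi _ hp.1)
  set θ : E × ℝ → ℝ := fun p => (1 - p.2) / gi p.1 + p.2 / go p.1 with hθ
  set P : E × ℝ → E := fun p => θ p • p.1 with hP
  have hθlow : ∀ p ∈ C, 1 / L ≤ θ p := by
    intro p hp
    have h1 : 1 / L ≤ 1 / gi p.1 := one_div_le_one_div_of_le (hgip' p hp) (hgip p hp)
    have h2 : 1 / L ≤ 1 / go p.1 :=
      one_div_le_one_div_of_le (hgop' p hp) ((hgogi _ hp.1).trans (hgip p hp))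
    have h3 := hp.2.2.1
    have h4 := hp.2.2.2
    simp only [hθ]
    rw [div_eq_mul_one_div (1 - p.2), div_eq_mul_one_div p.2]
    nlinarith
  have hθhigh : ∀ p ∈ C, θ p ≤ 1 / κ' := by
    intro p hp
    have h1 : 1 / gi p.1 ≤ 1 / κ' := one_div_le_one_div_of_le hκ' ((hgop p hp).trans (hgogi _ hp.1))
    have h2 : 1 / go p.1 ≤ 1 / κ' := one_div_le_one_div_of_le hκ' (hgop p hp)
    have h3 := hp.2.2.1
    have h4 := hp.2.2.2
    simp only [hθ]
    rw [div_eq_mul_one_div (1 - p.2), div_eq_mul_one_div p.2]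
    nlinarith
  have hθpos : ∀ p ∈ C, 0 < θ p := fun p hp => (by positivity : 0 < 1 / L).trans_le (hθlow p hp)
  have hPK : ∀ p ∈ C, P p ∈ K := fun p hp => hKsmul _ (hθpos p hp).le _ hp.1
  have hℓP : ∀ p ∈ C, ℓ (P p) = θ p := by
    intro p hp
    simp only [hP, map_smul, hp.2.1, smul_eq_mul, mul_one]
  have hPnorm : ∀ p ∈ C, ‖P p‖ ≤ 1 / κ' / κ := by
    intro p hp
    have := hκℓ _ (hPK p hp)
    rw [hℓP p hp] at this
    rw [le_div_iff₀ hκ]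
    linarith [hθhigh p hp]
  have hθc : ContinuousOn θ C := by
    simp only [hθ]
    refine ContinuousOn.add (ContinuousOn.div (by fun_prop) (by fun_prop) ?_)
      (ContinuousOn.div (by fun_prop) (by fun_prop) ?_)
    · exact fun p hp => (hgip' p hp).ne'
    · exact fun p hp => (hgop' p hp).ne'
  have hPc : ContinuousOn P C := hθc.smul continuous_fst.continuousOn
  set δ : ℝ := 1 / (2 * L) with hδ
  have hδpos : 0 < δ := by positivity
  have hδL : δ < 1 / L := by
    rw [hδ]; apply one_div_lt_one_div_of_lt hL; linarith
  set M : E → E := fun y => y + (max 0 (δ - ℓ y)) • e with hM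
  have hMc : Continuous M := by simp only [hM]; fun_prop
  have hMℓ : ∀ y, ℓ (M y) = max (ℓ y) δ := by
    intro y
    simp only [hM, map_add, map_smul, hle, smul_eq_mul, mul_one]
    rcases le_total (ℓ y) δ with h | h
    · rw [max_eq_right h, max_eq_right (by linarith)]; ring
    · rw [max_eq_left h, max_eq_left (by linarith)]; ring
  have hMpos : ∀ y, 0 < ℓ (M y) := fun y => by
    rw [hMℓ]; exact hδpos.trans_le (le_max_right _ _)
  set W : E → E := fun y => (ℓ (M y))⁻¹ • M y with hW
  have hWc : Continuous W := by
    simp only [hW]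
    exact ((ℓ.continuous.comp hMc).inv₀ (fun y => (hMpos y).ne')).smul hMc
  have hMK : ∀ y ∈ K, M y ∈ K := fun y hy => hKadd _ hy _ (hKsmul _ (le_max_left _ _) _ he)
  obtain ⟨Q, hQ, hTQ'⟩ := hTQ (1 / κ' / κ)
  set G : E × ℝ → E × ℝ := fun p =>
    (W (T (P p)), max 0 (min 1 (p.2 - (ℓ (M (T (P p))) - ℓ (P p))))) with hG
  obtain ⟨p, hp, hfix⟩ := schauder C ((W '' Q) ×ˢ Set.Icc (0:ℝ) 1)
    (by
      intro x hx y hy a b ha hb hab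
      refine ⟨hKadd _ (hKsmul a ha _ hx.1) _ (hKsmul b hb _ hy.1), ?_, ?_⟩
      · simp only [Prod.fst_add, Prod.smul_fst, map_add, map_smul, hx.2.1, hy.2.1, smul_eq_mul,
          mul_one, hab]
      · exact convex_Icc (0:ℝ) 1 hx.2.2 hy.2.2 ha hb hab)
    (by
      refine (hKc.preimage continuous_fst).inter
        (IsClosed.inter ?_ (isClosed_Icc.preimage continuous_snd))
      exact isClosed_eq (ℓ.continuous.comp continuous_fst) continuous_const)
    ⟨(e, 0), he, hle, by simp⟩ G
    (by
      have h1 : ContinuousOn (fun p => T (P p)) C := hT.comp_continuousOn hPc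
      have h2 : ContinuousOn (fun p => ℓ (M (T (P p)))) C :=
        (ℓ.continuous.comp hMc).comp_continuousOn h1
      have h3 : ContinuousOn (fun p => ℓ (P p)) C := ℓ.continuous.comp_continuousOn hPc
      refine (hWc.comp_continuousOn h1).prodMk ?_
      have h4 : Continuous (fun r : ℝ => max 0 (min 1 r)) := by fun_prop
      exact h4.comp_continuousOn (continuous_snd.continuousOn.sub (h2.sub h3)))
    (by
      intro p hp
      refine ⟨hKsmul _ (inv_nonneg.2 (hMpos _).le) _ (hMK _ (hTK _ (hPK p hp))), ?_, ?_⟩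
      · simp only [hG, hW, map_smul, smul_eq_mul]
        exact inv_mul_cancel₀ (hMpos _).ne'
      · exact ⟨le_max_left _ _, max_le zero_le_one (min_le_left _ _)⟩)
    ((hQ.image hWc).prod isCompact_Icc)
    (by
      intro p hp
      refine ⟨⟨_, hTQ' _ (hPnorm p hp), rfl⟩, ?_⟩
      exact ⟨le_max_left _ _, max_le zero_le_one (min_le_left _ _)⟩)
  have hf1 : W (T (P p)) = p.1 := congrArg Prod.fst hfix
  have hf2 : max 0 (min 1 (p.2 - (ℓ (M (T (P p))) - ℓ (P p)))) = p.2 := congrArg Prod.snd hfix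
  have hθp := hθpos p hp
  set μ : ℝ := ℓ (M (T (P p))) / θ p with hμ
  have hμpos : 0 < μ := div_pos (hMpos _) hθp
  have hMμ : M (T (P p)) = μ • P p := by
    have h1 : M (T (P p)) = ℓ (M (T (P p))) • p.1 := by
      rw [← hf1]
      simp only [hW]
      rw [smul_smul, mul_inv_cancel₀ (hMpos _).ne', one_smul]
    conv_lhs => rw [h1]
    simp only [hP]
    rw [smul_smul, hμ, div_mul_cancel₀ _ hθp.ne']
  have hMT : 1 ≤ μ → M (T (P p)) = T (P p) := by
    intro h
    have h1 : θ p ≤ ℓ (M (T (P p))) := by rwa [hμ, le_div_iff₀ hθp, one_mul] at h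
    have h2 : δ < ℓ (T (P p)) := by
      have := hθlow p hp
      rw [hMℓ] at h1
      by_contra hcon
      push Not at hcon
      rw [max_eq_right hcon] at h1
      linarith
    simp only [hM]
    rw [max_eq_left (by linarith), zero_smul, add_zero]
  have hp2 := hp.2.2
  rcases lt_trichotomy μ 1 with hlt | heq | hgt
  · -- μ < 1: τ increases, so τ = 1
    exfalso
    have h1 : ℓ (M (T (P p))) < θ p := by rwa [hμ, div_lt_one hθp] at hlt
    rw [← hℓP p hp] at h1
    have h2 : p.2 = 1 := by
      by_contra hne
      have h3 : p.2 < 1 := lt_of_le_of_ne hp2.2 hne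
      have h4 : p.2 < max 0 (min 1 (p.2 - (ℓ (M (T (P p))) - ℓ (P p)))) :=
        lt_max_of_lt_right (lt_min h3 (by linarith))
      linarith
    refine hout (P p) (hPK p hp) ?_ μ _ hμpos.le hlt.le (le_max_left 0 (δ - ℓ (T (P p)))) hMμ
    simp only [hP]
    rw [hgoh _ hθp.le]
    simp only [hθ, h2]
    have := (hgop' p hp).ne'
    field_simp
    ring
  · refine ⟨P p, hPK p hp, by rw [hℓP p hp]; exact hθp, ?_⟩
    rw [← hMT heq.ge, hMμ, heq, one_smul]
  · exfalso
    have h1 : θ p < ℓ (M (T (P p))) := by rwa [hμ, one_lt_div hθp] at hgt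
    rw [← hℓP p hp] at h1
    have h2 : p.2 = 0 := by
      by_contra hne
      have h3 : 0 < p.2 := lt_of_le_of_ne hp2.1 (Ne.symm hne)
      have h4 : max 0 (min 1 (p.2 - (ℓ (M (T (P p))) - ℓ (P p)))) < p.2 :=
        max_lt h3 ((min_le_right _ _).trans_lt (by linarith))
      linarith
    refine hin (P p) (hPK p hp) ?_ μ hgt.le ((hMT hgt.le).symm.trans hMμ)
    simp only [hP]
    rw [hgih _ hθp.le]
    simp only [hθ, h2]
    have := (hgip' p hp).ne'
    field_simp
    ring

end Schauder

section Hammerstein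
open Filter Topology

/-- the unit interval as a type -/
abbrev UI := Set.Icc (0:ℝ) 1

/-- projection to the unit interval -/
noncomputable abbrev pr (s : ℝ) : UI := Set.projIcc (0:ℝ) 1 zero_le_one s

lemma continuous_pr : Continuous pr := continuous_projIcc

lemma pr_of_mem {s : ℝ} (hs : s ∈ Set.Icc (0:ℝ) 1) : pr s = ⟨s, hs⟩ :=
  Set.projIcc_of_mem zero_le_one hs

lemma hop_integrand_continuous (k : ℝ → ℝ → ℝ) (hk : Continuous (Function.uncurry k))
    (g : C(UI × ℝ × ℝ, ℝ)) :
    Continuous (fun q : ((C(UI, ℝ) × C(UI, ℝ)) × UI) × ℝ =>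
      k q.1.2 q.2 * g (pr q.2, q.1.1.1 (pr q.2), q.1.1.2 (pr q.2))) := by
  have h1 : Continuous (fun q : ((C(UI, ℝ) × C(UI, ℝ)) × UI) × ℝ => pr q.2) :=
    continuous_pr.comp continuous_snd
  have h2 : Continuous (fun q : ((C(UI, ℝ) × C(UI, ℝ)) × UI) × ℝ => k q.1.2 q.2) :=
    hk.comp (f := fun q : ((C(UI, ℝ) × C(UI, ℝ)) × UI) × ℝ => ((q.1.2 : ℝ), q.2)) (by fun_prop)
  refine h2.mul (g.continuous.comp (h1.prodMk (Continuous.prodMk ?_ ?_)))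
  · exact (continuous_fst.fst.fst).eval h1
  · exact (continuous_fst.fst.snd).eval h1

/-- the Hammerstein operator -/
noncomputable def Hop (k : ℝ → ℝ → ℝ) (hk : Continuous (Function.uncurry k))
    (g : C(UI × ℝ × ℝ, ℝ)) (p : C(UI, ℝ) × C(UI, ℝ)) : C(UI, ℝ) :=
  ⟨fun t => ∫ s in (0:ℝ)..1, k t s * g (pr s, p.1 (pr s), p.2 (pr s)), by
    refine intervalIntegral.continuous_parametric_intervalIntegral_of_continuous'
      (f := fun (t : UI) s => k t s * g (pr s, p.1 (pr s), p.2 (pr s))) ?_ 0 1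
    exact (hop_integrand_continuous k hk g).comp
      (f := fun q : UI × ℝ => ((p, q.1), q.2)) (by fun_prop)⟩

lemma Hop_apply (k : ℝ → ℝ → ℝ) (hk : Continuous (Function.uncurry k))
    (g : C(UI × ℝ × ℝ, ℝ)) (p : C(UI, ℝ) × C(UI, ℝ)) (t : UI) :
    Hop k hk g p t = ∫ s in (0:ℝ)..1, k t s * g (pr s, p.1 (pr s), p.2 (pr s)) := rfl

lemma Hop_continuous (k : ℝ → ℝ → ℝ) (hk : Continuous (Function.uncurry k))
    (g : C(UI × ℝ × ℝ, ℝ)) : Continuous (Hop k hk g) := by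
  apply ContinuousMap.continuous_of_continuous_uncurry
  exact intervalIntegral.continuous_parametric_intervalIntegral_of_continuous'
      (f := fun (q : (C(UI, ℝ) × C(UI, ℝ)) × UI) s =>
        k q.2 s * g (pr s, q.1.1 (pr s), q.1.2 (pr s)))
      (hop_integrand_continuous k hk g) 0 1

lemma g_comp_continuous (g : C(UI × ℝ × ℝ, ℝ)) (p : C(UI, ℝ) × C(UI, ℝ)) :
    Continuous (fun s : ℝ => g (pr s, p.1 (pr s), p.2 (pr s))) := by
  have := continuous_pr
  fun_prop

lemma k_cont_left (k : ℝ → ℝ → ℝ) (hk : Continuous (Function.uncurry k)) (t : ℝ) :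
    Continuous (fun s => k t s) :=
  hk.comp (f := fun s : ℝ => (t, s)) (by fun_prop)

lemma Hop_compact (k : ℝ → ℝ → ℝ) (hk : Continuous (Function.uncurry k))
    (g : C(UI × ℝ × ℝ, ℝ)) (R : ℝ) :
    ∃ Q : Set C(UI, ℝ), IsCompact Q ∧ ∀ p, ‖p‖ ≤ R → Hop k hk g p ∈ Q := by
  -- bounds
  have hcompact : IsCompact ((Set.univ : Set UI) ×ˢ (Set.Icc (-R) R ×ˢ Set.Icc (-R) R)) :=
    isCompact_univ.prod (isCompact_Icc.prod isCompact_Icc)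
  obtain ⟨B, hB⟩ := hcompact.exists_bound_of_continuousOn g.continuous.continuousOn
  have hgB : ∀ p : C(UI, ℝ) × C(UI, ℝ), ‖p‖ ≤ R → ∀ s, |g (pr s, p.1 (pr s), p.2 (pr s))| ≤ B := by
    intro p hp s
    refine hB _ ⟨Set.mem_univ _, ?_, ?_⟩
    · exact abs_le.1 (((p.1.norm_coe_le_norm _).trans (norm_fst_le p)).trans hp)
    · exact abs_le.1 (((p.2.norm_coe_le_norm _).trans (norm_snd_le p)).trans hp)
  have hdiff : ∀ a b : ℝ, ∀ s, IntervalIntegrable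
      (fun s => |k a s - k b s| * B) volume 0 s := by
    intro a b s
    exact (((k_cont_left k hk a).sub (k_cont_left k hk b)).abs.mul continuous_const).intervalIntegrable _ _
  have hIntg : ∀ (p : C(UI, ℝ) × C(UI, ℝ)) (t : UI), IntervalIntegrable
      (fun s => k t s * g (pr s, p.1 (pr s), p.2 (pr s))) volume 0 1 := fun p t =>
    ((k_cont_left k hk t).mul (g_comp_continuous g p)).intervalIntegrable _ _
  obtain ⟨Φ, hΦ⟩ := ((isCompact_Icc (a := (0:ℝ)) (b := 1)).prod
    (isCompact_Icc (a := (0:ℝ)) (b := 1))).exists_bound_of_continuousOn hk.continuousOn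
  let A : Set (BoundedContinuousFunction UI ℝ) :=
    {w | ∃ p, ‖p‖ ≤ R ∧ w = BoundedContinuousFunction.mkOfCompact (Hop k hk g p)}
  have hA : IsCompact (closure A) := by
    refine BoundedContinuousFunction.arzela_ascoli (Set.Icc (-(Φ * B)) (Φ * B)) isCompact_Icc A ?_ ?_
    · rintro _ t ⟨p, hp, rfl⟩
      rw [BoundedContinuousFunction.mkOfCompact_apply, Hop_apply]
      refine abs_le.1 ?_
      have := intervalIntegral.norm_integral_le_of_norm_le_const (a := (0:ℝ)) (b := 1) (C := Φ * B)
        (f := fun s => k t s * g (pr s, p.1 (pr s), p.2 (pr s))) ?_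
      · simpa using this
      · intro s hs
        rw [Set.uIoc_of_le zero_le_one] at hs
        rw [norm_mul]
        have h1 := hΦ (t.1, s) ⟨t.2, ⟨hs.1.le, hs.2⟩⟩
        exact mul_le_mul h1 (hgB p hp s) (norm_nonneg _) ((norm_nonneg _).trans h1)
    · intro t0
      refine Metric.equicontinuousAt_of_continuity_modulus
        (fun t : UI => ∫ s in (0:ℝ)..1, |k t0 s - k t s| * B) ?_ _ ?_
      · have : Continuous (fun t : UI => ∫ s in (0:ℝ)..1, |k t0 s - k t s| * B) := by
          refine intervalIntegral.continuous_parametric_intervalIntegral_of_continuous'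
            (f := fun (t : UI) s => |k t0 s - k t s| * B) ?_ 0 1
          have h1 : Continuous (fun q : UI × ℝ => k t0 q.2) :=
            (k_cont_left k hk t0).comp continuous_snd
          have h2 : Continuous (fun q : UI × ℝ => k q.1 q.2) :=
            hk.comp (f := fun q : UI × ℝ => ((q.1 : ℝ), q.2)) (by fun_prop)
          exact (h1.sub h2).abs.mul continuous_const
        have h := this.tendsto t0
        simpa using h
      · refine Eventually.of_forall fun t => ?_
        rintro ⟨_, p, hp, rfl⟩
        simp only [BoundedContinuousFunction.mkOfCompact_apply]
        rw [Hop_apply, Hop_apply, Real.dist_eq, ← intervalIntegral.integral_sub (hIntg p t0) (hIntg p t)]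
        refine (intervalIntegral.abs_integral_le_integral_abs zero_le_one).trans ?_
        refine intervalIntegral.integral_mono_on zero_le_one ?_ (hdiff _ _ _) ?_
        · exact ((hIntg p t0).sub (hIntg p t)).abs
        · intro s _
          rw [← sub_mul, abs_mul]
          exact mul_le_mul_of_nonneg_left (hgB p hp s) (abs_nonneg _)
  let iso := (ContinuousMap.isometryEquivBoundedOfCompact UI ℝ)
  refine ⟨iso.symm '' closure A, hA.image iso.symm.continuous, fun p hp => ?_⟩
  refine ⟨BoundedContinuousFunction.mkOfCompact (Hop k hk g p), subset_closure ⟨p, hp, rfl⟩, ?_⟩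
  ext t; rfl

/-- the component cones -/
def coneC (b c : ℝ) : Set C(UI, ℝ) := {u | ∀ t s : UI, (t : ℝ) ≤ b → c * |u s| ≤ u t}

lemma Hop_cone (k : ℝ → ℝ → ℝ) (hk : Continuous (Function.uncurry k))
    (g : C(UI × ℝ × ℝ, ℝ)) (hg : ∀ q, 0 ≤ g q) (b c Φ : ℝ) (hc : 0 ≤ c)
    (hΦ : ∀ t ∈ Set.Icc (0:ℝ) 1, ∀ s ∈ Set.Icc (0:ℝ) 1, |k t s| ≤ Φ)
    (hlow : ∀ t ∈ Set.Icc (0:ℝ) 1, t ≤ b → ∀ s ∈ Set.Icc (0:ℝ) 1, c * Φ ≤ k t s)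
    (p : C(UI, ℝ) × C(UI, ℝ)) : Hop k hk g p ∈ coneC b c := by
  intro t s ht
  have hgc := g_comp_continuous g p
  have hIntg : ∀ (t : UI), IntervalIntegrable
      (fun s => k t s * g (pr s, p.1 (pr s), p.2 (pr s))) volume 0 1 := fun t =>
    ((k_cont_left k hk t).mul hgc).intervalIntegrable _ _
  have h1 : |Hop k hk g p s| ≤ ∫ x in (0:ℝ)..1, Φ * g (pr x, p.1 (pr x), p.2 (pr x)) := by
    rw [Hop_apply]
    refine (intervalIntegral.abs_integral_le_integral_abs zero_le_one).trans ?_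
    refine intervalIntegral.integral_mono_on zero_le_one (hIntg s).abs
      ((continuous_const.mul hgc).intervalIntegrable _ _) ?_
    intro x hx
    rw [abs_mul, abs_of_nonneg (hg _)]
    exact mul_le_mul_of_nonneg_right (hΦ s s.2 x hx) (hg _)
  refine (mul_le_mul_of_nonneg_left h1 hc).trans ?_
  rw [← intervalIntegral.integral_const_mul, Hop_apply]
  refine intervalIntegral.integral_mono_on zero_le_one
    ((continuous_const.mul (continuous_const.mul hgc)).intervalIntegrable _ _) (hIntg t) ?_
  intro x hx
  rw [← mul_assoc]
  exact mul_le_mul_of_nonneg_right (hlow t t.2 ht x hx) (hg _)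

lemma Hop_small (k : ℝ → ℝ → ℝ) (hk : Continuous (Function.uncurry k))
    (g : C(UI × ℝ × ℝ, ℝ)) (hg : ∀ q, 0 ≤ g q) (m ρ Φ : ℝ) (hm : 0 < m)
    (hΦ : ∀ t ∈ Set.Icc (0:ℝ) 1, ∀ s ∈ Set.Icc (0:ℝ) 1, |k t s| ≤ Φ)
    (hm' : 1 / m = ⨆ t : Set.Icc (0:ℝ) 1, ∫ s in (0:ℝ)..1, |k t.1 s|)
    (p : C(UI, ℝ) × C(UI, ℝ)) (hp : ∀ s : UI, g (s, p.1 s, p.2 s) < m * ρ) (t : UI) :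
    |Hop k hk g p t| < ρ := by
  have hgc := g_comp_continuous g p
  have hc : Continuous (fun s : UI => g (s, p.1 s, p.2 s)) := by fun_prop
  obtain ⟨s0, -, hs0⟩ := (isCompact_univ (X := UI)).exists_isMaxOn
    ⟨⟨0, by simp⟩, Set.mem_univ _⟩ hc.continuousOn
  set B := g (s0, p.1 s0, p.2 s0) with hB
  have hBle : ∀ s : UI, g (s, p.1 s, p.2 s) ≤ B := fun s => hs0 (Set.mem_univ s)
  have hkt := (k_cont_left k hk t).abs
  have h1 : |Hop k hk g p t| ≤ ∫ x in (0:ℝ)..1, |k t x| * B := by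
    rw [Hop_apply]
    refine (intervalIntegral.abs_integral_le_integral_abs zero_le_one).trans ?_
    refine intervalIntegral.integral_mono_on zero_le_one
      (((k_cont_left k hk t).mul hgc).intervalIntegrable _ _).abs
      ((hkt.mul continuous_const).intervalIntegrable _ _) ?_
    intro x hx
    rw [abs_mul, abs_of_nonneg (hg _)]
    exact mul_le_mul_of_nonneg_left (hBle _) (abs_nonneg _)
  rw [intervalIntegral.integral_mul_const] at h1
  have h2 : ∫ x in (0:ℝ)..1, |k t x| ≤ 1 / m := by
    rw [hm']
    refine le_ciSup (f := fun t : Set.Icc (0:ℝ) 1 => ∫ s in (0:ℝ)..1, |k t.1 s|) ?_ t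
    refine ⟨Φ, ?_⟩
    rintro _ ⟨t, rfl⟩
    have := intervalIntegral.integral_mono_on (μ := volume) (zero_le_one (α := ℝ))
      ((k_cont_left k hk t).abs.intervalIntegrable _ _)
      (continuous_const (y := Φ).intervalIntegrable (μ := volume) 0 1) (fun x hx => hΦ t t.2 x hx)
    simpa using this
  have hB0 : 0 ≤ B := hg _
  calc |Hop k hk g p t| ≤ (1 / m) * B := h1.trans (mul_le_mul_of_nonneg_right h2 hB0)
    _ < ρ := by
      have := hp s0
      rw [one_div, inv_mul_lt_iff₀ hm]
      exact this

lemma Hop_large (k : ℝ → ℝ → ℝ) (hk : Continuous (Function.uncurry k))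
    (g : C(UI × ℝ × ℝ, ℝ)) (hg : ∀ q, 0 ≤ g q) (M r b Φ : ℝ) (hM : 0 < M)
    (hb0 : 0 ≤ b) (hb1 : b ≤ 1)
    (hΦ : ∀ t ∈ Set.Icc (0:ℝ) 1, ∀ s ∈ Set.Icc (0:ℝ) 1, |k t s| ≤ Φ)
    (hlow : ∀ t ∈ Set.Icc (0:ℝ) 1, t ≤ b → ∀ s ∈ Set.Icc (0:ℝ) 1, 0 ≤ k t s)
    (hM' : 1 / M = ⨅ t : Set.Icc (0:ℝ) b, ∫ s in (0:ℝ)..b, k t.1 s)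
    (p : C(UI, ℝ) × C(UI, ℝ)) (hp : ∀ s : UI, (s : ℝ) ≤ b → M * r < g (s, p.1 s, p.2 s))
    (t : UI) (ht : (t : ℝ) ≤ b) :
    r < Hop k hk g p t := by
  have hgc := g_comp_continuous g p
  have hc : Continuous (fun s : UI => g (s, p.1 s, p.2 s)) := by fun_prop
  have hcl : IsCompact {s : UI | (s : ℝ) ≤ b} :=
    (isClosed_le (by fun_prop) continuous_const).isCompact
  obtain ⟨s0, hs0b, hs0⟩ := hcl.exists_isMinOn ⟨⟨0, by simp⟩, hb0⟩ hc.continuousOn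
  set B := g (s0, p.1 s0, p.2 s0) with hB
  have hBle : ∀ s : UI, (s : ℝ) ≤ b → B ≤ g (s, p.1 s, p.2 s) := fun s hs => hs0 hs
  have hkt := (k_cont_left k hk t)
  have hB0 : 0 ≤ B := hg _
  have h2 : 1 / M ≤ ∫ x in (0:ℝ)..b, k t x := by
    rw [hM']
    refine ciInf_le (f := fun t : Set.Icc (0:ℝ) b => ∫ s in (0:ℝ)..b, k t.1 s) ?_ ⟨t, t.2.1, ht⟩
    refine ⟨0, ?_⟩
    rintro _ ⟨t, rfl⟩
    refine intervalIntegral.integral_nonneg hb0 fun x hx => ?_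
    exact hlow t ⟨t.2.1, t.2.2.trans hb1⟩ t.2.2 x ⟨hx.1, hx.2.trans hb1⟩
  have hIntg : ∀ x y, IntervalIntegrable
      (fun s => k t s * g (pr s, p.1 (pr s), p.2 (pr s))) volume x y := fun x y =>
    ((k_cont_left k hk t).mul hgc).intervalIntegrable _ _
  have h1 : (∫ x in (0:ℝ)..b, k t x * B) ≤ Hop k hk g p t := by
    rw [Hop_apply, ← intervalIntegral.integral_add_adjacent_intervals (hIntg 0 b) (hIntg b 1)]
    have h3 : 0 ≤ ∫ s in b..1, k t s * g (pr s, p.1 (pr s), p.2 (pr s)) := by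
      refine intervalIntegral.integral_nonneg hb1 fun x hx => ?_
      exact mul_nonneg (hlow t t.2 ht x ⟨hb0.trans hx.1, hx.2⟩) (hg _)
    have h4 : (∫ x in (0:ℝ)..b, k t x * B) ≤
        ∫ s in (0:ℝ)..b, k t s * g (pr s, p.1 (pr s), p.2 (pr s)) := by
      refine intervalIntegral.integral_mono_on hb0
        ((hkt.mul continuous_const).intervalIntegrable _ _) (hIntg _ _) fun x hx => ?_
      have hx1 : x ∈ Set.Icc (0:ℝ) 1 := ⟨hx.1, hx.2.trans hb1⟩
      refine mul_le_mul_of_nonneg_left (hBle _ ?_) (hlow t t.2 ht x hx1)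
      rw [pr_of_mem hx1]; exact hx.2
    linarith
  rw [intervalIntegral.integral_mul_const] at h1
  have h5 := hp s0 hs0b
  calc r < (1 / M) * B := by
        rw [one_div, lt_inv_mul_iff₀ hM]; exact h5
    _ ≤ _ := (mul_le_mul_of_nonneg_right h2 hB0).trans h1

/-- minimum over `[0,b]` -/
noncomputable def mn (b : ℝ) (u : C(UI, ℝ)) : ℝ := infOn 0 b (Set.IccExtend zero_le_one u)

lemma mn_spec (b : ℝ) (hb0 : 0 ≤ b) (hb1 : b ≤ 1) (u : C(UI, ℝ)) :
    ∃ t : UI, (t : ℝ) ≤ b ∧ mn b u = u t ∧ ∀ s : UI, (s : ℝ) ≤ b → u t ≤ u s := by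
  have hcl : IsCompact {s : UI | (s : ℝ) ≤ b} :=
    (isClosed_le (by fun_prop) continuous_const).isCompact
  obtain ⟨t, htb, ht⟩ := hcl.exists_isMinOn ⟨⟨0, by simp⟩, hb0⟩ u.continuous.continuousOn
  have hmin : ∀ s : UI, (s : ℝ) ≤ b → u t ≤ u s := fun s hs => ht hs
  refine ⟨t, htb, ?_, hmin⟩
  have hlb : ∀ s : Set.Icc (0:ℝ) b, u t ≤ Set.IccExtend zero_le_one u s.1 := by
    intro s
    rw [Set.IccExtend_of_mem _ _ ⟨s.2.1, s.2.2.trans hb1⟩]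
    exact hmin _ s.2.2
  have : Nonempty (Set.Icc (0:ℝ) b) := ⟨⟨t, t.2.1, htb⟩⟩
  refine le_antisymm ?_ (le_ciInf hlb)
  have := ciInf_le (f := fun s : Set.Icc (0:ℝ) b => Set.IccExtend zero_le_one u s.1)
    ⟨u t, by rintro _ ⟨s, rfl⟩; exact hlb s⟩ ⟨t, t.2.1, htb⟩
  simp only at this
  rwa [Set.IccExtend_of_mem _ _ t.2] at this

lemma mn_continuous (b : ℝ) (hb0 : 0 ≤ b) (hb1 : b ≤ 1) : Continuous (mn b) := by
  have hle : ∀ u v, mn b u ≤ mn b v + dist u v := by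
    intro u v
    obtain ⟨t, htb, h1, h2⟩ := mn_spec b hb0 hb1 u
    obtain ⟨t', htb', h1', h2'⟩ := mn_spec b hb0 hb1 v
    have h3 := h2 t' htb'
    have h4 := ContinuousMap.dist_apply_le_dist (f := u) (g := v) t'
    rw [Real.dist_eq] at h4
    have := (abs_le.1 h4).2
    linarith
  have : LipschitzWith 1 (mn b) := LipschitzWith.of_le_add hle
  exact this.continuous

lemma mn_smul (b : ℝ) (hb0 : 0 ≤ b) (hb1 : b ≤ 1) (a : ℝ) (ha : 0 ≤ a) (u : C(UI, ℝ)) :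
    mn b (a • u) = a * mn b u := by
  obtain ⟨t, htb, h1, h2⟩ := mn_spec b hb0 hb1 u
  obtain ⟨t', htb', h1', h2'⟩ := mn_spec b hb0 hb1 (a • u)
  rw [h1, h1']
  have h3 := h2' t htb
  have h4 := mul_le_mul_of_nonneg_left (h2 t' htb') ha
  simp only [ContinuousMap.coe_smul, Pi.smul_apply, smul_eq_mul] at h3 ⊢
  exact le_antisymm h3 h4

end Hammerstein

section Kernel

lemma kernel_props (α β η b c : ℝ) (hα : 1 < α) (hα2 : α ≤ 2) (hβ : 0 < β)
    (hη : η ∈ Set.Icc (0:ℝ) 1) (hβη : β * Real.Gamma α < (1 - η) ^ (α - 1))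
    (hηb : η ≤ b) (hb : b < 1) (hβb : (b - η) ^ (α - 1) < β * Real.Gamma α)
    (k : ℝ → ℝ → ℝ)
    (hk : ∀ t s : ℝ, k t s =
      β + (if s ≤ η then (η - s) ^ (α - 1) / Real.Gamma α else 0) -
        (if s ≤ t then (t - s) ^ (α - 1) / Real.Gamma α else 0))
    (hc : c = min
      ((β * Real.Gamma α - (b - η) ^ (α - 1)) / ((1 - η) ^ (α - 1) - β * Real.Gamma α))
      ((β * Real.Gamma α - (b - η) ^ (α - 1)) / (β * Real.Gamma α + η ^ (α - 1)))) :
    Continuous (Function.uncurry k) ∧ 0 < c ∧ c ≤ 1 ∧ ∃ Φ : ℝ, 0 ≤ Φ ∧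
      (∀ t ∈ Set.Icc (0:ℝ) 1, ∀ s ∈ Set.Icc (0:ℝ) 1, |k t s| ≤ Φ) ∧
      (∀ t ∈ Set.Icc (0:ℝ) 1, t ≤ b → ∀ s ∈ Set.Icc (0:ℝ) 1, c * Φ ≤ k t s) := by
  have hG : 0 < Real.Gamma α := Real.Gamma_pos_of_pos (by linarith)
  have hp : 0 < α - 1 := by linarith
  have hp1 : α - 1 ≤ 1 := by linarith
  set p := α - 1 with hpdef
  set G := Real.Gamma α with hGdef
  have hpos : ∀ x s : ℝ, (if s ≤ x then (x - s) ^ p / G else 0) = (max (x - s) 0) ^ p / G := by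
    intro x s
    split_ifs with h
    · rw [max_eq_left (by linarith)]
    · rw [max_eq_right (by linarith), Real.zero_rpow hp.ne', zero_div]
  have hk' : ∀ t s, k t s = β + (max (η - s) 0) ^ p / G - (max (t - s) 0) ^ p / G := by
    intro t s
    rw [hk, hpos, hpos]
  have hsub : ∀ B t s : ℝ, t ≤ B → η ≤ B →
      (max (t - s) 0) ^ p ≤ (max (η - s) 0) ^ p + (B - η) ^ p := by
    intro B t s htB hηB
    refine le_trans ?_ (Real.rpow_add_le_add_rpow (le_max_right _ _) (by linarith) hp.le hp1)
    refine Real.rpow_le_rpow (le_max_right _ _) ?_ hp.le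
    have h1 := le_max_left (η - s) 0
    have h2 := le_max_right (η - s) 0
    exact max_le (by linarith) (by linarith)
  have hηp : 0 ≤ η ^ p := Real.rpow_nonneg hη.1 _
  have hbp : 0 ≤ (b - η) ^ p := Real.rpow_nonneg (by linarith) _
  have hβG : 0 < β * G := mul_pos hβ hG
  set D := β * G - (b - η) ^ p with hD
  set P1 := (1 - η) ^ p - β * G with hP1
  set P2 := β * G + η ^ p with hP2
  have hDpos : 0 < D := by linarith
  have hP1pos : 0 < P1 := by linarith
  have hP2pos : 0 < P2 := by linarith
  have hc0 : 0 < c := by rw [hc]; exact lt_min (div_pos hDpos hP1pos) (div_pos hDpos hP2pos)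
  have hcP1 : c * P1 ≤ D := by
    have : c ≤ D / P1 := by rw [hc]; exact min_le_left _ _
    rwa [le_div_iff₀ hP1pos] at this
  have hcP2 : c * P2 ≤ D := by
    have : c ≤ D / P2 := by rw [hc]; exact min_le_right _ _
    rwa [le_div_iff₀ hP2pos] at this
  refine ⟨?_, hc0, ?_, max P1 P2 / G, ?_, ?_, ?_⟩
  · have : Function.uncurry k = fun q : ℝ × ℝ =>
        β + (max (η - q.2) 0) ^ p / G - (max (q.1 - q.2) 0) ^ p / G := by
      funext q; exact hk' q.1 q.2
    rw [this]
    have h1 : Continuous fun q : ℝ × ℝ => (max (η - q.2) 0) ^ p :=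
      Continuous.rpow_const (by fun_prop) (fun _ => Or.inr hp.le)
    have h2 : Continuous fun q : ℝ × ℝ => (max (q.1 - q.2) 0) ^ p :=
      Continuous.rpow_const (by fun_prop) (fun _ => Or.inr hp.le)
    exact (continuous_const.add (h1.div_const _)).sub (h2.div_const _)
  · by_contra hcon
    have : 1 * P2 < c * P2 := mul_lt_mul_of_pos_right (not_le.mp hcon) hP2pos
    linarith
  · exact div_nonneg (le_max_of_le_left hP1pos.le) hG.le
  · intro t ht s hs
    have h1 := hsub 1 t s ht.2 hη.2
    have h2 : (max (η - s) 0) ^ p ≤ η ^ p :=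
      Real.rpow_le_rpow (le_max_right _ _) (max_le (by linarith [hs.1]) hη.1) hp.le
    have h3 : 0 ≤ (max (t - s) 0) ^ p := Real.rpow_nonneg (le_max_right _ _) _
    have h4 : k t s = (β * G + (max (η - s) 0) ^ p - (max (t - s) 0) ^ p) / G := by
      rw [hk']; field_simp
    rw [h4, abs_div, abs_of_pos hG]
    refine div_le_div_of_nonneg_right ?_ hG.le
    have := le_max_left P1 P2
    have := le_max_right P1 P2
    exact abs_le.mpr ⟨by linarith, by linarith⟩
  · intro t ht htb s hs
    have h1 := hsub b t s htb hηb
    have h4 : k t s = (β * G + (max (η - s) 0) ^ p - (max (t - s) 0) ^ p) / G := by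
      rw [hk']; field_simp
    rw [h4, ← mul_div_assoc]
    refine div_le_div_of_nonneg_right ?_ hG.le
    rcases max_cases P1 P2 with h | h <;> rw [h.1] <;> linarith

end Kernel

section ConeFacts
open Filter Topology

lemma coneC_norm {b c : ℝ} (hc : 0 < c) {u : C(UI, ℝ)} (hu : u ∈ coneC b c) (hb : 0 ≤ b)
    (t : UI) (ht : (t : ℝ) ≤ b) : c * ‖u‖ ≤ u t := by
  have h0 : 0 ≤ u t := (mul_nonneg hc.le (abs_nonneg _)).trans (hu t t ht)
  have : ‖u‖ ≤ u t / c := by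
    rw [ContinuousMap.norm_le _ (div_nonneg h0 hc.le)]
    intro s
    rw [Real.norm_eq_abs, le_div_iff₀ hc, mul_comm]
    exact hu t s ht
  rw [le_div_iff₀ hc] at this
  linarith

lemma coneC_closed (b c : ℝ) : IsClosed (coneC b c) := by
  have : coneC b c = ⋂ t : UI, ⋂ s : UI, ⋂ _ : (t : ℝ) ≤ b,
      {u : C(UI, ℝ) | c * |u s| ≤ u t} := by
    ext u; simp only [coneC, Set.mem_setOf_eq, Set.mem_iInter]
  rw [this]
  refine isClosed_iInter fun t => isClosed_iInter fun s => isClosed_iInter fun _ => ?_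
  exact isClosed_le (by fun_prop) (by fun_prop)

lemma coneC_add {b c : ℝ} (hc : 0 ≤ c) {u v : C(UI, ℝ)} (hu : u ∈ coneC b c)
    (hv : v ∈ coneC b c) : u + v ∈ coneC b c := by
  intro t s ht
  have h1 := hu t s ht
  have h2 := hv t s ht
  have h3 := mul_le_mul_of_nonneg_left (abs_add_le (u s) (v s)) hc
  simp only [ContinuousMap.add_apply]
  linarith

lemma coneC_smul {b c : ℝ} {u : C(UI, ℝ)} (hu : u ∈ coneC b c) {a : ℝ} (ha : 0 ≤ a) :
    a • u ∈ coneC b c := by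
  intro t s ht
  have h1 := mul_le_mul_of_nonneg_left (hu t s ht) ha
  simp only [ContinuousMap.smul_apply, smul_eq_mul, abs_mul, abs_of_nonneg ha]
  linarith

lemma coneC_half {b c : ℝ} (hc : c ≤ 1) :
    ContinuousMap.const UI (1/2 : ℝ) ∈ coneC b c := by
  intro t s ht
  simp only [ContinuousMap.const_apply]
  rw [abs_of_pos (by norm_num)]
  linarith

lemma exists_norm_attained (u : C(UI, ℝ)) : ∃ t, |u t| = ‖u‖ := by
  obtain ⟨t, -, ht⟩ := (isCompact_univ (X := UI)).exists_isMaxOn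
    ⟨⟨0, by simp⟩, Set.mem_univ _⟩ (f := fun t => |u t|) (by fun_prop)
  refine ⟨t, le_antisymm (u.norm_coe_le_norm t) ?_⟩
  rw [ContinuousMap.norm_le _ (abs_nonneg _)]
  exact fun s => ht (Set.mem_univ s)

lemma supNorm_ext (u : C(UI, ℝ)) : supNorm (Set.IccExtend zero_le_one u) = ‖u‖ := by
  have hval : ∀ t : UI, Set.IccExtend zero_le_one u t.1 = u t := fun t =>
    Set.IccExtend_val zero_le_one u t
  unfold supNorm
  simp_rw [hval]
  refine le_antisymm ?_ ?_
  · haveI : Nonempty (Set.Icc (0:ℝ) 1) := ⟨⟨0, by simp⟩⟩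
    exact ciSup_le fun t => u.norm_coe_le_norm t
  · obtain ⟨t, ht⟩ := exists_norm_attained u
    rw [← ht]
    exact le_ciSup (f := fun t : UI => |u t|)
      ⟨‖u‖, by rintro _ ⟨s, rfl⟩; exact u.norm_coe_le_norm s⟩ t

lemma small_contra {ρ : ℝ} {u w : C(UI, ℝ)} (hu : ‖u‖ = ρ) (hw : ∀ t, |w t| < ρ) {μ : ℝ}
    (hμ : 1 ≤ μ) : w ≠ μ • u := by
  intro h
  obtain ⟨t, ht⟩ := exists_norm_attained u
  have h1 := hw t
  rw [h, ContinuousMap.smul_apply, smul_eq_mul, abs_mul, ht, abs_of_pos (by linarith), hu] at h1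
  have : 0 ≤ ρ := hu ▸ norm_nonneg u
  nlinarith

lemma large_contra {r b : ℝ} (hr : 0 < r) {u w : C(UI, ℝ)} (hb0 : 0 ≤ b) (hb1 : b ≤ 1)
    (hu : mn b u = r)
    (hw : ∀ t : UI, (t : ℝ) ≤ b → r < w t) {μ l : ℝ} (hμ : μ ≤ 1) (hl : 0 ≤ l) :
    w + l • ContinuousMap.const UI (1/2 : ℝ) ≠ μ • u := by
  intro h
  obtain ⟨t, htb, h1, -⟩ := mn_spec b hb0 hb1 u
  have h2 := hw t htb
  have h3 := congrArg (fun z : C(UI, ℝ) => z t) h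
  simp only [ContinuousMap.add_apply, ContinuousMap.smul_apply, smul_eq_mul,
    ContinuousMap.const_apply] at h3
  rw [← h1, hu] at h3
  nlinarith

lemma mn_bounds {r b c : ℝ} (hc : 0 < c) (hb0 : 0 ≤ b) (hb1 : b ≤ 1) {u : C(UI, ℝ)}
    (hu : u ∈ coneC b c) (hle : mn b u ≤ r) (s : UI) :
    u s ∈ Set.Icc (-(r / c)) (r / c) := by
  obtain ⟨t, htb, h1, -⟩ := mn_spec b hb0 hb1 u
  have h2 := hu t s htb
  have : |u s| ≤ r / c := by
    rw [le_div_iff₀ hc]; linarith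
  exact abs_le.mp this

end ConeFacts

section Restrict

/-- restriction of the nonlinearity to the strip -/
noncomputable def fRes (f : ℝ → ℝ → ℝ → ℝ)
    (hf : ContinuousOn (fun p : ℝ × ℝ × ℝ => f p.1 p.2.1 p.2.2)
      (Set.Icc 0 1 ×ˢ (Set.univ : Set (ℝ × ℝ)))) : C(UI × ℝ × ℝ, ℝ) :=
  ⟨fun q => f q.1 q.2.1 q.2.2, hf.comp_continuous
    (f := fun q : UI × ℝ × ℝ => ((q.1 : ℝ), q.2.1, q.2.2)) (by fun_prop)
    (fun q => ⟨q.1.2, Set.mem_univ _⟩)⟩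

lemma fRes_apply (f : ℝ → ℝ → ℝ → ℝ)
    (hf : ContinuousOn (fun p : ℝ × ℝ × ℝ => f p.1 p.2.1 p.2.2)
      (Set.Icc 0 1 ×ˢ (Set.univ : Set (ℝ × ℝ)))) (q : UI × ℝ × ℝ) :
    fRes f hf q = f q.1 q.2.1 q.2.2 := rfl

lemma Hop_ext (k : ℝ → ℝ → ℝ) (hk : Continuous (Function.uncurry k)) (f : ℝ → ℝ → ℝ → ℝ)
    (hf : ContinuousOn (fun p : ℝ × ℝ × ℝ => f p.1 p.2.1 p.2.2)
      (Set.Icc 0 1 ×ˢ (Set.univ : Set (ℝ × ℝ)))) (p : C(UI, ℝ) × C(UI, ℝ)) (t : ℝ)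
    (ht : t ∈ Set.Icc (0:ℝ) 1) :
    Set.IccExtend zero_le_one (Hop k hk (fRes f hf) p) t =
      ∫ s in (0:ℝ)..1, k t s * f s (Set.IccExtend zero_le_one p.1 s)
        (Set.IccExtend zero_le_one p.2 s) := by
  rw [Set.IccExtend_of_mem _ _ ht, Hop_apply]
  refine intervalIntegral.integral_congr ?_
  intro s hs
  rw [Set.uIcc_of_le zero_le_one] at hs
  simp only [fRes_apply, pr_of_mem hs, Set.IccExtend_of_mem _ _ hs]

end Restrict


theorem fractional_system_existence
    (α₁ α₂ β₁ β₂ η₁ η₂ b₁ b₂ c₁ c₂ : ℝ)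
    (hα₁ : 1 < α₁) (hα₁' : α₁ ≤ 2) (hα₂ : 1 < α₂) (hα₂' : α₂ ≤ 2)
    (hβ₁ : 0 < β₁) (hβ₂ : 0 < β₂)
    (hη₁ : η₁ ∈ Set.Icc (0:ℝ) 1) (hη₂ : η₂ ∈ Set.Icc (0:ℝ) 1)
    (hβη₁ : β₁ * Real.Gamma α₁ < (1 - η₁) ^ (α₁ - 1))
    (hβη₂ : β₂ * Real.Gamma α₂ < (1 - η₂) ^ (α₂ - 1))
    (hηb₁ : η₁ ≤ b₁) (hb₁ : b₁ < 1) (hβb₁ : (b₁ - η₁) ^ (α₁ - 1) < β₁ * Real.Gamma α₁)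
    (hηb₂ : η₂ ≤ b₂) (hb₂ : b₂ < 1) (hβb₂ : (b₂ - η₂) ^ (α₂ - 1) < β₂ * Real.Gamma α₂)
    (k₁ k₂ : ℝ → ℝ → ℝ)
    (hk₁ : ∀ t s : ℝ, k₁ t s =
      β₁ + (if s ≤ η₁ then (η₁ - s) ^ (α₁ - 1) / Real.Gamma α₁ else 0) -
        (if s ≤ t then (t - s) ^ (α₁ - 1) / Real.Gamma α₁ else 0))
    (hk₂ : ∀ t s : ℝ, k₂ t s =
      β₂ + (if s ≤ η₂ then (η₂ - s) ^ (α₂ - 1) / Real.Gamma α₂ else 0) -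
        (if s ≤ t then (t - s) ^ (α₂ - 1) / Real.Gamma α₂ else 0))
    (hc₁ : c₁ = min
      ((β₁ * Real.Gamma α₁ - (b₁ - η₁) ^ (α₁ - 1)) / ((1 - η₁) ^ (α₁ - 1) - β₁ * Real.Gamma α₁))
      ((β₁ * Real.Gamma α₁ - (b₁ - η₁) ^ (α₁ - 1)) / (β₁ * Real.Gamma α₁ + η₁ ^ (α₁ - 1))))
    (hc₂ : c₂ = min
      ((β₂ * Real.Gamma α₂ - (b₂ - η₂) ^ (α₂ - 1)) / ((1 - η₂) ^ (α₂ - 1) - β₂ * Real.Gamma α₂))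
      ((β₂ * Real.Gamma α₂ - (b₂ - η₂) ^ (α₂ - 1)) / (β₂ * Real.Gamma α₂ + η₂ ^ (α₂ - 1))))
    (f₁ f₂ : ℝ → ℝ → ℝ → ℝ)
    (hf₁ : ContinuousOn (fun p : ℝ × ℝ × ℝ => f₁ p.1 p.2.1 p.2.2)
      (Set.Icc 0 1 ×ˢ (Set.univ : Set (ℝ × ℝ))))
    (hf₂ : ContinuousOn (fun p : ℝ × ℝ × ℝ => f₂ p.1 p.2.1 p.2.2)
      (Set.Icc 0 1 ×ˢ (Set.univ : Set (ℝ × ℝ))))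
    (hf₁nn : ∀ t ∈ Set.Icc (0:ℝ) 1, ∀ x y : ℝ, 0 ≤ f₁ t x y)
    (hf₂nn : ∀ t ∈ Set.Icc (0:ℝ) 1, ∀ x y : ℝ, 0 ≤ f₂ t x y)
    (m₁ m₂ M₁ M₂ : ℝ)
    (hm₁pos : 0 < m₁) (hm₂pos : 0 < m₂)
    (hm₁ : 1 / m₁ = ⨆ t : Set.Icc (0:ℝ) 1, ∫ s in (0:ℝ)..1, |k₁ t.1 s|)
    (hm₂ : 1 / m₂ = ⨆ t : Set.Icc (0:ℝ) 1, ∫ s in (0:ℝ)..1, |k₂ t.1 s|)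
    (hM₁pos : 0 < M₁) (hM₂pos : 0 < M₂)
    (hinf₁pos : 0 < ⨅ t : Set.Icc (0:ℝ) b₁, ∫ s in (0:ℝ)..b₁, k₁ t.1 s)
    (hinf₂pos : 0 < ⨅ t : Set.Icc (0:ℝ) b₂, ∫ s in (0:ℝ)..b₂, k₂ t.1 s)
    (hM₁ : 1 / M₁ = ⨅ t : Set.Icc (0:ℝ) b₁, ∫ s in (0:ℝ)..b₁, k₁ t.1 s)
    (hM₂ : 1 / M₂ = ⨅ t : Set.Icc (0:ℝ) b₂, ∫ s in (0:ℝ)..b₂, k₂ t.1 s)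
    (ρ₁ ρ₂ r₁ r₂ : ℝ) (hρ₁ : 0 < ρ₁) (hρ₂ : 0 < ρ₂) (hr₁pos : 0 < r₁) (hr₂pos : 0 < r₂)
    (hρr₁ : ρ₁ < r₁) (hρr₂ : ρ₂ < r₂)
    (hsmall : ∀ t ∈ Set.Icc (0:ℝ) 1, ∀ x ∈ Set.Icc (-ρ₁) ρ₁, ∀ y ∈ Set.Icc (-ρ₂) ρ₂,
      f₁ t x y < m₁ * ρ₁ ∧ f₂ t x y < m₂ * ρ₂)
    (hlarge₁ : ∀ t ∈ Set.Icc (0:ℝ) b₁, ∀ x ∈ Set.Icc r₁ (r₁ / c₁),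
      ∀ y ∈ Set.Icc (-(r₂ / c₂)) (r₂ / c₂), M₁ * r₁ < f₁ t x y)
    (hlarge₂ : ∀ t ∈ Set.Icc (0:ℝ) b₂, ∀ x ∈ Set.Icc (-(r₁ / c₁)) (r₁ / c₁),
      ∀ y ∈ Set.Icc r₂ (r₂ / c₂), M₂ * r₂ < f₂ t x y) :
    ∃ u v : ℝ → ℝ, inCone 0 b₁ c₁ 0 b₂ c₂ u v ∧ isSolution k₁ k₂ f₁ f₂ u v ∧
      0 < max (supNorm u) (supNorm v) := by
  obtain ⟨hkc₁, hc₁0, hc₁1, Φ₁, hΦ₁0, hΦ₁, hlow₁⟩ := kernel_props α₁ β₁ η₁ b₁ c₁ hα₁ hα₁' hβ₁ hη₁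
    hβη₁ hηb₁ hb₁ hβb₁ k₁ hk₁ hc₁
  obtain ⟨hkc₂, hc₂0, hc₂1, Φ₂, hΦ₂0, hΦ₂, hlow₂⟩ := kernel_props α₂ β₂ η₂ b₂ c₂ hα₂ hα₂' hβ₂ hη₂
    hβη₂ hηb₂ hb₂ hβb₂ k₂ hk₂ hc₂
  have hb₁0 : 0 ≤ b₁ := hη₁.1.trans hηb₁
  have hb₂0 : 0 ≤ b₂ := hη₂.1.trans hηb₂
  have hg₁nn : ∀ q, 0 ≤ fRes f₁ hf₁ q := fun q => hf₁nn q.1 q.1.2 _ _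
  have hg₂nn : ∀ q, 0 ≤ fRes f₂ hf₂ q := fun q => hf₂nn q.1 q.1.2 _ _
  have hlow₁' : ∀ t ∈ Set.Icc (0:ℝ) 1, t ≤ b₁ → ∀ s ∈ Set.Icc (0:ℝ) 1, 0 ≤ k₁ t s :=
    fun t ht htb s hs => (mul_nonneg hc₁0.le hΦ₁0).trans (hlow₁ t ht htb s hs)
  have hlow₂' : ∀ t ∈ Set.Icc (0:ℝ) 1, t ≤ b₂ → ∀ s ∈ Set.Icc (0:ℝ) 1, 0 ≤ k₂ t s :=
    fun t ht htb s hs => (mul_nonneg hc₂0.le hΦ₂0).trans (hlow₂ t ht htb s hs)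
  let z : UI := ⟨0, by simp⟩
  let ℓ : C(UI, ℝ) × C(UI, ℝ) →L[ℝ] ℝ :=
    (ContinuousMap.evalCLM ℝ z).comp (ContinuousLinearMap.fst ℝ C(UI, ℝ) C(UI, ℝ)) +
      (ContinuousMap.evalCLM ℝ z).comp (ContinuousLinearMap.snd ℝ C(UI, ℝ) C(UI, ℝ))
  have hℓ : ∀ x : C(UI, ℝ) × C(UI, ℝ), ℓ x = x.1 z + x.2 z := fun x => rfl
  let K : Set (C(UI, ℝ) × C(UI, ℝ)) := coneC b₁ c₁ ×ˢ coneC b₂ c₂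
  have hz₁ : ∀ x ∈ K, c₁ * ‖x.1‖ ≤ x.1 z := fun x hx => coneC_norm hc₁0 hx.1 hb₁0 z hb₁0
  have hz₂ : ∀ x ∈ K, c₂ * ‖x.2‖ ≤ x.2 z := fun x hx => coneC_norm hc₂0 hx.2 hb₂0 z hb₂0
  have hn₁ : ∀ x ∈ K, c₁ * ‖x.1‖ ≤ mn b₁ x.1 := by
    intro x hx
    obtain ⟨t, htb, h1, -⟩ := mn_spec b₁ hb₁0 hb₁.le x.1
    rw [h1]; exact coneC_norm hc₁0 hx.1 hb₁0 t htb
  have hn₂ : ∀ x ∈ K, c₂ * ‖x.2‖ ≤ mn b₂ x.2 := by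
    intro x hx
    obtain ⟨t, htb, h1, -⟩ := mn_spec b₂ hb₂0 hb₂.le x.2
    rw [h1]; exact coneC_norm hc₂0 hx.2 hb₂0 t htb
  have hle : ∀ (u : C(UI, ℝ)) (t : UI), u t ≤ ‖u‖ := fun u t =>
    (le_abs_self _).trans (u.norm_coe_le_norm t)
  have hmnle : ∀ (b : ℝ) (_ : 0 ≤ b) (_ : b ≤ 1) (u : C(UI, ℝ)), mn b u ≤ ‖u‖ := by
    intro b h0 h1 u
    obtain ⟨t, htb, h2, -⟩ := mn_spec b h0 h1 u
    rw [h2]; exact hle u t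
  obtain ⟨x, hxK, hxpos, hTx⟩ := cone_expansion K
    ((coneC_closed b₁ c₁).prod (coneC_closed b₂ c₂))
    (fun x hx y hy => ⟨coneC_add hc₁0.le hx.1 hy.1, coneC_add hc₂0.le hx.2 hy.2⟩)
    (fun a ha x hx => ⟨coneC_smul hx.1 ha, coneC_smul hx.2 ha⟩)
    ℓ (ContinuousMap.const UI (1/2 : ℝ), ContinuousMap.const UI (1/2 : ℝ))
    ⟨coneC_half hc₁1, coneC_half hc₂1⟩
    (by rw [hℓ]; simp only [ContinuousMap.const_apply]; norm_num)
    (min c₁ c₂) (lt_min hc₁0 hc₂0)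
    (by
      intro x hx
      rw [hℓ, Prod.norm_def]
      have h1 := hz₁ x hx
      have h2 := hz₂ x hx
      have h3 := norm_nonneg x.1
      have h4 := norm_nonneg x.2
      have h5 := mul_le_mul_of_nonneg_right (min_le_left c₁ c₂) h3
      have h6 := mul_le_mul_of_nonneg_right (min_le_right c₁ c₂) h4
      have h7 := mul_nonneg hc₁0.le h3
      have h8 := mul_nonneg hc₂0.le h4
      rcases max_cases ‖x.1‖ ‖x.2‖ with h | h <;> rw [h.1] <;> linarith)
    (fun x => max (‖x.1‖ / ρ₁) (‖x.2‖ / ρ₂))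
    (fun x => max (mn b₁ x.1 / r₁) (mn b₂ x.2 / r₂))
    (by fun_prop)
    ((((mn_continuous b₁ hb₁0 hb₁.le).comp continuous_fst).div_const _).max
      (((mn_continuous b₂ hb₂0 hb₂.le).comp continuous_snd).div_const _))
    (by
      intro a ha x
      simp only [Prod.smul_fst, Prod.smul_snd, norm_smul, Real.norm_of_nonneg ha]
      rw [mul_max_of_nonneg _ _ ha, mul_div_assoc, mul_div_assoc])
    (by
      intro a ha x
      simp only [Prod.smul_fst, Prod.smul_snd, mn_smul b₁ hb₁0 hb₁.le a ha,
        mn_smul b₂ hb₂0 hb₂.le a ha]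
      rw [mul_max_of_nonneg _ _ ha, mul_div_assoc, mul_div_assoc])
    (min (c₁ / r₁) (c₂ / r₂) / 2) (1 / (c₁ * ρ₁) + 1 / (c₂ * ρ₂))
    (half_pos (lt_min (div_pos hc₁0 hr₁pos) (div_pos hc₂0 hr₂pos)))
    (by
      intro x hx
      rw [hℓ]
      have q1 : min (c₁ / r₁) (c₂ / r₂) * x.1 z ≤ mn b₁ x.1 / r₁ := by
        have h1 := hn₁ x hx
        have h2 := norm_nonneg x.1
        calc min (c₁ / r₁) (c₂ / r₂) * x.1 z ≤ min (c₁ / r₁) (c₂ / r₂) * ‖x.1‖ :=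
              mul_le_mul_of_nonneg_left (hle _ _)
                (lt_min (div_pos hc₁0 hr₁pos) (div_pos hc₂0 hr₂pos)).le
          _ ≤ c₁ / r₁ * ‖x.1‖ := mul_le_mul_of_nonneg_right (min_le_left _ _) h2
          _ = c₁ * ‖x.1‖ / r₁ := by ring
          _ ≤ _ := div_le_div_of_nonneg_right h1 hr₁pos.le
      have q2 : min (c₁ / r₁) (c₂ / r₂) * x.2 z ≤ mn b₂ x.2 / r₂ := by
        have h1 := hn₂ x hx
        have h2 := norm_nonneg x.2
        calc min (c₁ / r₁) (c₂ / r₂) * x.2 z ≤ min (c₁ / r₁) (c₂ / r₂) * ‖x.2‖ :=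
              mul_le_mul_of_nonneg_left (hle _ _)
                (lt_min (div_pos hc₁0 hr₁pos) (div_pos hc₂0 hr₂pos)).le
          _ ≤ c₂ / r₂ * ‖x.2‖ := mul_le_mul_of_nonneg_right (min_le_right _ _) h2
          _ = c₂ * ‖x.2‖ / r₂ := by ring
          _ ≤ _ := div_le_div_of_nonneg_right h1 hr₂pos.le
      have q3 := le_max_left (mn b₁ x.1 / r₁) (mn b₂ x.2 / r₂)
      have q4 := le_max_right (mn b₁ x.1 / r₁) (mn b₂ x.2 / r₂)
      have : min (c₁ / r₁) (c₂ / r₂) / 2 * (x.1 z + x.2 z) =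
        (min (c₁ / r₁) (c₂ / r₂) * x.1 z + min (c₁ / r₁) (c₂ / r₂) * x.2 z) / 2 := by ring
      rw [this]
      linarith)
    (by
      intro x hx
      refine max_le_max ?_ ?_
      · exact div_le_div₀ (norm_nonneg _) (hmnle b₁ hb₁0 hb₁.le _) hρ₁ hρr₁.le
      · exact div_le_div₀ (norm_nonneg _) (hmnle b₂ hb₂0 hb₂.le _) hρ₂ hρr₂.le)
    (by
      intro x hx
      rw [hℓ]
      have h1 := hz₁ x hx
      have h2 := hz₂ x hx
      have p1 : 0 ≤ x.1 z := (mul_nonneg hc₁0.le (norm_nonneg _)).trans h1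
      have p2 : 0 ≤ x.2 z := (mul_nonneg hc₂0.le (norm_nonneg _)).trans h2
      have d1 : 0 < c₁ * ρ₁ := mul_pos hc₁0 hρ₁
      have d2 : 0 < c₂ * ρ₂ := mul_pos hc₂0 hρ₂
      have e1 : ‖x.1‖ / ρ₁ ≤ 1 / (c₁ * ρ₁) * x.1 z := by
        have : ‖x.1‖ / ρ₁ = 1 / (c₁ * ρ₁) * (c₁ * ‖x.1‖) := by field_simp
        rw [this]
        exact mul_le_mul_of_nonneg_left h1 (by positivity)
      have e2 : ‖x.2‖ / ρ₂ ≤ 1 / (c₂ * ρ₂) * x.2 z := by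
        have : ‖x.2‖ / ρ₂ = 1 / (c₂ * ρ₂) * (c₂ * ‖x.2‖) := by field_simp
        rw [this]
        exact mul_le_mul_of_nonneg_left h2 (by positivity)
      have i1 : 0 ≤ 1 / (c₁ * ρ₁) := by positivity
      have i2 : 0 ≤ 1 / (c₂ * ρ₂) := by positivity
      have a1 := mul_nonneg i1 p1
      have a2 := mul_nonneg i1 p2
      have a3 := mul_nonneg i2 p1
      have a4 := mul_nonneg i2 p2
      rw [add_mul, mul_add, mul_add]
      exact max_le (by linarith) (by linarith))
    (fun p => (Hop k₁ hkc₁ (fRes f₁ hf₁) p, Hop k₂ hkc₂ (fRes f₂ hf₂) p))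
    ((Hop_continuous k₁ hkc₁ _).prodMk (Hop_continuous k₂ hkc₂ _))
    (fun p _ => ⟨Hop_cone k₁ hkc₁ _ hg₁nn b₁ c₁ Φ₁ hc₁0.le hΦ₁ hlow₁ p,
      Hop_cone k₂ hkc₂ _ hg₂nn b₂ c₂ Φ₂ hc₂0.le hΦ₂ hlow₂ p⟩)
    (by
      intro R
      obtain ⟨Q₁, hQ₁, h1⟩ := Hop_compact k₁ hkc₁ (fRes f₁ hf₁) R
      obtain ⟨Q₂, hQ₂, h2⟩ := Hop_compact k₂ hkc₂ (fRes f₂ hf₂) R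
      exact ⟨Q₁ ×ˢ Q₂, hQ₁.prod hQ₂, fun x hx => ⟨h1 x hx, h2 x hx⟩⟩)
    (by
      intro x hx hgi μ hμ heq
      have n1 : ‖x.1‖ ≤ ρ₁ := by
        have := (le_max_left (‖x.1‖ / ρ₁) (‖x.2‖ / ρ₂)).trans_eq hgi
        rwa [div_le_one hρ₁] at this
      have n2 : ‖x.2‖ ≤ ρ₂ := by
        have := (le_max_right (‖x.1‖ / ρ₁) (‖x.2‖ / ρ₂)).trans_eq hgi
        rwa [div_le_one hρ₂] at this
      have hs : ∀ s : UI, f₁ s (x.1 s) (x.2 s) < m₁ * ρ₁ ∧ f₂ s (x.1 s) (x.2 s) < m₂ * ρ₂ :=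
        fun s => hsmall s s.2 _ (abs_le.mp ((x.1.norm_coe_le_norm s).trans n1)) _
          (abs_le.mp ((x.2.norm_coe_le_norm s).trans n2))
      rcases max_choice (‖x.1‖ / ρ₁) (‖x.2‖ / ρ₂) with h | h
      · have h' : ‖x.1‖ / ρ₁ = 1 := h.symm.trans hgi
        rw [div_eq_one_iff_eq hρ₁.ne'] at h'
        exact small_contra h' (Hop_small k₁ hkc₁ _ hg₁nn m₁ ρ₁ Φ₁ hm₁pos hΦ₁ hm₁ x
          (fun s => (hs s).1)) hμ (congrArg Prod.fst heq)
      · have h' : ‖x.2‖ / ρ₂ = 1 := h.symm.trans hgi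
        rw [div_eq_one_iff_eq hρ₂.ne'] at h'
        exact small_contra h' (Hop_small k₂ hkc₂ _ hg₂nn m₂ ρ₂ Φ₂ hm₂pos hΦ₂ hm₂ x
          (fun s => (hs s).2)) hμ (congrArg Prod.snd heq))
    (by
      intro x hx hgo μ l hμ0 hμ hl heq
      have n1 : mn b₁ x.1 ≤ r₁ := by
        have := (le_max_left (mn b₁ x.1 / r₁) (mn b₂ x.2 / r₂)).trans_eq hgo
        rwa [div_le_one hr₁pos] at this
      have n2 : mn b₂ x.2 ≤ r₂ := by
        have := (le_max_right (mn b₁ x.1 / r₁) (mn b₂ x.2 / r₂)).trans_eq hgo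
        rwa [div_le_one hr₂pos] at this
      have w1 := mn_bounds hc₁0 hb₁0 hb₁.le hx.1 n1
      have w2 := mn_bounds hc₂0 hb₂0 hb₂.le hx.2 n2
      rcases max_choice (mn b₁ x.1 / r₁) (mn b₂ x.2 / r₂) with h | h
      · have h' : mn b₁ x.1 / r₁ = 1 := h.symm.trans hgo
        rw [div_eq_one_iff_eq hr₁pos.ne'] at h'
        obtain ⟨t, htb, h1, h2⟩ := mn_spec b₁ hb₁0 hb₁.le x.1
        refine large_contra hr₁pos hb₁0 hb₁.le h' (Hop_large k₁ hkc₁ _ hg₁nn M₁ r₁ b₁ Φ₁ hM₁pos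
          hb₁0 hb₁.le hΦ₁ hlow₁' hM₁ x ?_) hμ hl (congrArg Prod.fst heq)
        intro s hs
        exact hlarge₁ s ⟨s.2.1, hs⟩ _ ⟨by linarith [h2 s hs], (w1 s).2⟩ _ (w2 s)
      · have h' : mn b₂ x.2 / r₂ = 1 := h.symm.trans hgo
        rw [div_eq_one_iff_eq hr₂pos.ne'] at h'
        obtain ⟨t, htb, h1, h2⟩ := mn_spec b₂ hb₂0 hb₂.le x.2
        refine large_contra hr₂pos hb₂0 hb₂.le h' (Hop_large k₂ hkc₂ _ hg₂nn M₂ r₂ b₂ Φ₂ hM₂pos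
          hb₂0 hb₂.le hΦ₂ hlow₂' hM₂ x ?_) hμ hl (congrArg Prod.snd heq)
        intro s hs
        exact hlarge₂ s ⟨s.2.1, hs⟩ _ (w1 s) _ ⟨by linarith [h2 s hs], (w2 s).2⟩)
  have hT1 : Hop k₁ hkc₁ (fRes f₁ hf₁) x = x.1 := congrArg Prod.fst hTx
  have hT2 : Hop k₂ hkc₂ (fRes f₂ hf₂) x = x.2 := congrArg Prod.snd hTx
  refine ⟨Set.IccExtend zero_le_one x.1, Set.IccExtend zero_le_one x.2,
    ⟨x.1.continuous.Icc_extend'.continuousOn, x.2.continuous.Icc_extend'.continuousOn, ?_, ?_⟩,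
    ⟨?_, ?_⟩, ?_⟩
  · rw [supNorm_ext]; exact hn₁ x hxK
  · rw [supNorm_ext]; exact hn₂ x hxK
  · intro t ht
    have := Hop_ext k₁ hkc₁ f₁ hf₁ x t ht
    rwa [hT1] at this
  · intro t ht
    have := Hop_ext k₂ hkc₂ f₂ hf₂ x t ht
    rwa [hT2] at this
  · rw [supNorm_ext, supNorm_ext]
    rw [hℓ] at hxpos
    by_contra hcon
    have h1 := (le_max_left ‖x.1‖ ‖x.2‖).trans (not_lt.mp hcon)
    have h2 := (le_max_right ‖x.1‖ ‖x.2‖).trans (not_lt.mp hcon)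
    linarith [hle x.1 z, hle x.2 z]
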